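/- Let M ≥ 0, suppose b : [−1,0] × B_1^0 → ℝ^n satisfies sup_{t∈[−1,0]} ‖b(t,·)‖_{C^{1−2s}(B_1^0)} ≤ M, suppose f : [−1,0] × B_1^0 → ℝ is bounded with sup |f| = F, and let u be a bounded classical solution of the extended drift–diffusion equation with drift b and right-hand side f. Then there exist α ∈ (0,1) and C > 0, both depending only on s, n and M, such that ‖u‖_{C^α([−1/2,0]×B_{1/2}^0)} + sup_{t∈[−1/2,0]} ‖u(t,·,·)‖_{C^α(B_{1/2}^+)} ≤ C ( sup_{[−1,0]×B_1^+} |u| + F ). -/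

import Mathlib

open Set Filter Topology MeasureTheory
open scoped RealInnerProductSpace

noncomputable section

abbrev En (n : ℕ) := EuclideanSpace ℝ (Fin n)

/-- The open upper half ball `B_r^+`. -/
def halfBall (n : ℕ) (r : ℝ) : Set (En n × ℝ) :=
  {p | ‖p.1‖ ^ 2 + p.2 ^ 2 < r ^ 2 ∧ 0 < p.2}

/-- The closure of the upper half ball. -/
def closedHalfBall (n : ℕ) (r : ℝ) : Set (En n × ℝ) :=
  {p | ‖p.1‖ ^ 2 + p.2 ^ 2 ≤ r ^ 2 ∧ 0 ≤ p.2}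

/-- `B_r^+ ∪ B_r^0`. -/
def halfBallWithBase (n : ℕ) (r : ℝ) : Set (En n × ℝ) :=
  {p | ‖p.1‖ ^ 2 + p.2 ^ 2 < r ^ 2 ∧ 0 ≤ p.2}

/-- The flat ball `B_r^0` in `ℝⁿ`. -/
def flatBall (n : ℕ) (r : ℝ) : Set (En n) := {x | ‖x‖ < r}

/-- `(∂B_1)^+`. -/
def spherePlus (n : ℕ) : Set (En n × ℝ) := {p | ‖p.1‖ ^ 2 + p.2 ^ 2 = 1 ∧ 0 < p.2}

/-- closure of `(∂B_1)^+`. -/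
def closedSpherePlus (n : ℕ) : Set (En n × ℝ) := {p | ‖p.1‖ ^ 2 + p.2 ^ 2 = 1 ∧ 0 ≤ p.2}

/-- Second directional derivative of `u` at `p` in direction `v`. -/
def D2 {n : ℕ} (u : En n × ℝ → ℝ) (p v : En n × ℝ) : ℝ :=
  fderiv ℝ (fun q => fderiv ℝ u q v) p v

/-- The Laplacian in the `n+1` variables `(x, y)`. -/
def lap {n : ℕ} (u : En n × ℝ → ℝ) (p : En n × ℝ) : ℝ :=
  (∑ i : Fin n, D2 u p (EuclideanSpace.single i 1, 0)) + D2 u p (0, 1)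

/-- `u` is `a`-harmonic on `Ω`: it is `C²` there and `Δu + (a/y) ∂_y u = 0`. -/
def IsAHarmonicOn {n : ℕ} (a : ℝ) (u : En n × ℝ → ℝ) (Ω : Set (En n × ℝ)) : Prop :=
  ContDiffOn ℝ 2 u Ω ∧ ∀ p ∈ Ω, lap u p + (a / p.2) * fderiv ℝ u p (0, 1) = 0

/-- `lim_{y → 0⁺} y^a ∂_y w(x, y) = L`. -/
def NormalDerivLimit {n : ℕ} (a : ℝ) (w : En n × ℝ → ℝ) (x : En n) (L : ℝ) : Prop :=
  Tendsto (fun y : ℝ => y ^ a * fderiv ℝ w (x, y) (0, 1)) (𝓝[>] (0 : ℝ)) (𝓝 L)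

/-- The boundary-restriction `(t, x) ↦ u(t, x, 0)`. -/
def bdryFun {n : ℕ} (u : ℝ → En n × ℝ → ℝ) : ℝ × En n → ℝ := fun q => u q.1 (q.2, 0)

/-- A classical solution of the extended drift–diffusion equation on
`[-1,0] × closure (B_1^+)` with drift `b` and right-hand side `f`. -/
def IsExtDDSolution {n : ℕ} (a : ℝ) (b : ℝ → En n → En n) (f : ℝ → En n → ℝ)
    (u : ℝ → En n × ℝ → ℝ) : Prop :=
  ContinuousOn (fun q : ℝ × (En n × ℝ) => u q.1 q.2) (Icc (-1 : ℝ) 0 ×ˢ closedHalfBall n 1) ∧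
  (∀ t ∈ Icc (-1 : ℝ) 0, IsAHarmonicOn a (u t) (halfBall n 1)) ∧
  (∀ q ∈ Ioc (-1 : ℝ) 0 ×ˢ flatBall n 1,
      DifferentiableWithinAt ℝ (bdryFun u) (Ioc (-1 : ℝ) 0 ×ˢ flatBall n 1) q) ∧
  (∀ t x, (t, x) ∈ Ioc (-1 : ℝ) 0 ×ˢ flatBall n 1 →
      ∃ L : ℝ, NormalDerivLimit a (u t) x L ∧
        fderivWithin ℝ (bdryFun u) (Ioc (-1 : ℝ) 0 ×ˢ flatBall n 1) (t, x) (1, 0) +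
          fderivWithin ℝ (bdryFun u) (Ioc (-1 : ℝ) 0 ×ˢ flatBall n 1) (t, x) (0, b t x) -
          L = f t x)

/-- A classical solution of the localized fractional heat equation on
`[-1,0] × closure (B_1^+)`. -/
def IsFracHeatSolution {n : ℕ} (a : ℝ) (u : ℝ → En n × ℝ → ℝ) : Prop :=
  ContinuousOn (fun q : ℝ × (En n × ℝ) => u q.1 q.2) (Icc (-1 : ℝ) 0 ×ˢ closedHalfBall n 1) ∧
  (∀ t ∈ Icc (-1 : ℝ) 0, IsAHarmonicOn a (u t) (halfBall n 1)) ∧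
  (∀ t ∈ Ioc (-1 : ℝ) 0, ∀ x ∈ flatBall n 1,
      DifferentiableWithinAt ℝ (fun τ => u τ (x, 0)) (Ioc (-1 : ℝ) 0) t ∧
      NormalDerivLimit a (u t) x (derivWithin (fun τ => u τ (x, 0)) (Ioc (-1 : ℝ) 0) t))




lemma second_test {g g' : ℝ → ℝ} {c : ℝ} (h1 : ∀ᶠ s in 𝓝 (0:ℝ), HasDerivAt g (g' s) s)
    (h2 : HasDerivAt g' c 0) (hm : IsLocalMax g 0) : g' 0 = 0 ∧ c ≤ 0 := by
  have e : deriv g =ᶠ[𝓝 0] g' := h1.mono fun s hs => hs.deriv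
  have h0 : deriv g 0 = 0 := hm.deriv_eq_zero
  have hg0 : g' 0 = 0 := by rw [← e.self_of_nhds]; exact h0
  refine ⟨hg0, ?_⟩
  by_contra hc
  push Not at hc
  have hdd : deriv (deriv g) 0 = c := by rw [e.deriv_eq]; exact h2.deriv
  have hmin := isLocalMin_of_deriv_deriv_pos (by rw [hdd]; exact hc) h0 h1.self_of_nhds.continuousAt
  have hconst : g =ᶠ[𝓝 0] fun _ => g 0 := by
    filter_upwards [hm, hmin] with s a b using le_antisymm a b
  have : deriv g =ᶠ[𝓝 0] fun _ => 0 := by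
    have := hconst.deriv
    simpa using this
  rw [this.deriv_eq] at hdd
  simp at hdd
  linarith

lemma line_deriv {n : ℕ} {w : En n × ℝ → ℝ} {Ω : Set (En n × ℝ)} (hΩ : IsOpen Ω)
    (hw : ContDiffOn ℝ 2 w Ω) {p : En n × ℝ} (hp : p ∈ Ω) (v : En n × ℝ) :
    (∀ᶠ s in 𝓝 (0:ℝ), HasDerivAt (fun s : ℝ => w (p + s • v)) (fderiv ℝ w (p + s • v) v) s) ∧
    HasDerivAt (fun s : ℝ => fderiv ℝ w (p + s • v) v) (D2 w p v) 0 := by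
  have hl : ∀ s : ℝ, HasDerivAt (fun s : ℝ => p + s • v) v s := fun s => by
    simpa using ((hasDerivAt_id s).smul_const v).const_add p
  constructor
  · have : ∀ᶠ s in 𝓝 (0:ℝ), p + s • v ∈ Ω := by
      have hc := (hl 0).continuousAt
      apply hc.eventually_mem
      simpa using hΩ.mem_nhds hp
    filter_upwards [this] with s hs
    have hd : DifferentiableAt ℝ w (p + s • v) :=
      ((hw.contDiffAt (hΩ.mem_nhds hs)).differentiableAt (by norm_num))
    exact hd.hasFDerivAt.comp_hasDerivAt s (hl s)
  · have hc : ContDiffAt ℝ 2 w p := hw.contDiffAt (hΩ.mem_nhds hp)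
    have h1 : ContDiffAt ℝ 1 (fderiv ℝ w) p := hc.fderiv_right (by norm_num)
    have h2 : DifferentiableAt ℝ (fun q => fderiv ℝ w q v) p :=
      (h1.differentiableAt (by norm_num)).clm_apply (differentiableAt_const v)
    have h3 : HasFDerivAt (fun q => fderiv ℝ w q v) (fderiv ℝ (fun q => fderiv ℝ w q v) p)
        (p + (0:ℝ) • v) := by simpa using h2.hasFDerivAt
    exact h3.comp_hasDerivAt (0:ℝ) (hl 0)

lemma D2_bilin {n : ℕ} {w : En n × ℝ → ℝ} {Ω : Set (En n × ℝ)} (hΩ : IsOpen Ω)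
    (hw : ContDiffOn ℝ 2 w Ω) {p : En n × ℝ} (hp : p ∈ Ω) (v : En n × ℝ) :
    D2 w p v = fderiv ℝ (fderiv ℝ w) p v v := by
  have hc : ContDiffAt ℝ 2 w p := hw.contDiffAt (hΩ.mem_nhds hp)
  have h1 : ContDiffAt ℝ 1 (fderiv ℝ w) p := hc.fderiv_right (by norm_num)
  have h2 := (h1.differentiableAt (by norm_num)).hasFDerivAt
  have := h2.clm_apply (hasFDerivAt_const v p)
  unfold D2
  rw [this.fderiv]
  simp

/-- reflection -/
def refl' {n : ℕ} (e v : En n) : En n := v - (2 * inner ℝ e v) • e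

lemma trace_refl {n : ℕ} (B : En n →L[ℝ] En n →L[ℝ] ℝ) (e : En n) (he : ‖e‖ = 1) :
    ∑ i : Fin n, B (refl' e (EuclideanSpace.single i 1)) (refl' e (EuclideanSpace.single i 1))
      = ∑ i : Fin n, B (EuclideanSpace.single i 1) (EuclideanSpace.single i 1) := by
  have hin : ∀ i, inner ℝ e (EuclideanSpace.single i (1:ℝ)) = e i := by
    intro i; simp [EuclideanSpace.inner_single_right]
  have hsum : ∑ i : Fin n, e i • (EuclideanSpace.single i (1:ℝ) : En n) = e := by
    ext j
    simp [Finset.sum_apply, Pi.single_apply]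
  have hsq : ∑ i : Fin n, e i ^ 2 = 1 := by
    have := EuclideanSpace.real_norm_sq_eq e
    rw [he] at this; simpa using this.symm
  have h1 : ∑ i : Fin n, e i * B (EuclideanSpace.single i 1) e = B e e := by
    have := congrArg (fun w => B w e) hsum
    simpa using this
  have h2 : ∑ i : Fin n, e i * B e (EuclideanSpace.single i 1) = B e e := by
    have := congrArg (fun w => B e w) hsum
    simpa using this
  have : ∀ i : Fin n, B (refl' e (EuclideanSpace.single i 1)) (refl' e (EuclideanSpace.single i 1))
      = B (EuclideanSpace.single i 1) (EuclideanSpace.single i 1)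
        - 2 * (e i * B (EuclideanSpace.single i 1) e) - 2 * (e i * B e (EuclideanSpace.single i 1))
        + 4 * (e i ^ 2 * B e e) := by
    intro i
    unfold refl'
    rw [hin]
    simp
    ring
  simp_rw [this, Finset.sum_add_distrib, Finset.sum_sub_distrib, ← Finset.mul_sum, h1, h2,
    ← Finset.sum_mul, hsq]
  ring

lemma left_test {g : ℝ → ℝ} {c : ℝ} (h : HasDerivWithinAt g c (Iic 0) 0)
    (hm : ∀ᶠ s in 𝓝[<] (0:ℝ), g s ≤ g 0) : 0 ≤ c := by
  have h' : HasDerivWithinAt g c (Iio 0) 0 := h.mono Iio_subset_Iic_self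
  rw [hasDerivWithinAt_iff_tendsto_slope' (by simp)] at h'
  refine ge_of_tendsto h' ?_
  filter_upwards [hm, self_mem_nhdsWithin] with s hs hs0
  rw [slope_def_field]
  have : s < 0 := hs0
  exact div_nonneg_of_nonpos (by linarith) (by linarith)

lemma lhop {s : ℝ} (hs : 0 < s) {D D' G : ℝ → ℝ} {Λ g0 : ℝ}
    (hc : Tendsto D (𝓝[>] 0) (𝓝 (D 0)))
    (hd : ∀ᶠ y in 𝓝[>] (0:ℝ), HasDerivAt D (D' y) y)
    (hl : Tendsto (fun y => y ^ (1 - 2*s) * D' y) (𝓝[>] 0) (𝓝 Λ))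
    (hle : ∀ᶠ y in 𝓝[>] (0:ℝ), D y - D 0 ≤ y ^ (2*s) * G y)
    (hG : Tendsto G (𝓝[>] 0) (𝓝 g0)) : Λ ≤ 2 * s * g0 := by
  have key : Tendsto (fun y => (D y - D 0) / y ^ (2*s)) (𝓝[>] 0) (𝓝 (Λ / (2*s))) := by
    apply HasDerivAt.lhopital_zero_nhdsGT (f' := D') (g' := fun y => 2*s * y ^ (2*s - 1))
    · filter_upwards [hd] with y hy using hy.sub_const _
    · filter_upwards [self_mem_nhdsWithin] with y hy
      exact Real.hasDerivAt_rpow_const (Or.inl (ne_of_gt hy))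
    · filter_upwards [self_mem_nhdsWithin] with y hy
      have : (0:ℝ) < y := hy
      positivity
    · simpa using hc.sub_const (D 0)
    · have : Tendsto (fun y : ℝ => y ^ (2*s)) (𝓝 0) (𝓝 (0 ^ (2*s))) :=
        (Real.continuousAt_rpow_const 0 (2*s) (Or.inr (by positivity)))
      rw [Real.zero_rpow (by positivity)] at this
      exact this.mono_left nhdsWithin_le_nhds
    · refine (hl.div_const (2*s)).congr' ?_
      filter_upwards [self_mem_nhdsWithin] with y hy
      have hy : (0:ℝ) < y := hy
      have : y ^ (1 - 2*s) * y ^ (2*s-1) = 1 := by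
        rw [← Real.rpow_add hy]; simp
      have h2 : y ^ (2*s-1) ≠ 0 := by positivity
      field_simp
      linear_combination (D' y) * this
  have : Λ / (2*s) ≤ g0 := by
    refine le_of_tendsto_of_tendsto key hG ?_
    filter_upwards [hle, self_mem_nhdsWithin] with y h hy
    have hy : (0:ℝ) < y := hy
    rw [div_le_iff₀ (by positivity)]
    linarith
  rw [div_le_iff₀ (by positivity)] at this
  linarith


/-- corrector -/
def Qf (s z y : ℝ) : ℝ := (y / (z + √(z^2 + y^2))) ^ (2*s)

lemma rho_pos {z y : ℝ} (hy : 0 < y) : 0 < √(z^2+y^2) := Real.sqrt_pos.2 (by positivity)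

lemma rho_sq (z y : ℝ) : √(z^2+y^2)^2 = z^2 + y^2 := Real.sq_sqrt (by positivity)

lemma rho_ge {z y : ℝ} : z ≤ √(z^2+y^2) := Real.le_sqrt_of_sq_le (by nlinarith [sq_nonneg y])

lemma rho_dz {z y : ℝ} (hy : 0 < y) :
    HasDerivAt (fun z => √(z^2+y^2)) (z / √(z^2+y^2)) z := by
  have h : HasDerivAt (fun z : ℝ => z^2+y^2) (2*z) z := by
    simpa using (hasDerivAt_pow 2 z).add_const (y^2)
  refine HasDerivAt.congr_deriv (h.sqrt (by positivity)) ?_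
  field_simp

lemma rho_dy {z y : ℝ} (hy : 0 < y) :
    HasDerivAt (fun y => √(z^2+y^2)) (y / √(z^2+y^2)) y := by
  have h : HasDerivAt (fun y : ℝ => z^2+y^2) (2*y) y := by
    simpa using (hasDerivAt_pow 2 y).const_add (z^2)
  refine HasDerivAt.congr_deriv (h.sqrt (by positivity)) ?_
  field_simp

lemma Qf_dz {s z y : ℝ} (hz : 0 < z) (hy : 0 < y) :
    HasDerivAt (fun z => Qf s z y) (-(2*s) * Qf s z y / √(z^2+y^2)) z := by
  have hr := rho_pos (z := z) hy
  have h1 : HasDerivAt (fun z => y / (z + √(z^2+y^2)))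
      (-(y / (z + √(z^2+y^2))) / √(z^2+y^2)) z := by
    refine HasDerivAt.congr_deriv ((hasDerivAt_const z y).fun_div ((hasDerivAt_id' z).fun_add (rho_dz hy)) (by positivity)) ?_
    · field_simp; ring
  have hb : 0 < y / (z + √(z^2+y^2)) := by positivity
  have := h1.rpow_const (p := 2*s) (Or.inl hb.ne')
  unfold Qf
  refine HasDerivAt.congr_deriv (this) ?_
  rw [Real.rpow_sub_one hb.ne']
  field_simp

lemma Qf_dy {s z y : ℝ} (hz : 0 < z) (hy : 0 < y) :
    HasDerivAt (fun y => Qf s z y) (2*s * Qf s z y * (z / (√(z^2+y^2) * y))) y := by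
  have hr := rho_pos (z := z) hy
  have hq := rho_sq z y
  have h1 : HasDerivAt (fun y => y / (z + √(z^2+y^2)))
      ((y / (z + √(z^2+y^2))) * (z / (√(z^2+y^2) * y))) y := by
    refine HasDerivAt.congr_deriv ((hasDerivAt_id' y).fun_div ((hasDerivAt_const y z).fun_add (rho_dy (z := z) hy)) (by positivity)) ?_
    · have : z + √(z^2+y^2) ≠ 0 := by positivity
      field_simp; linear_combination hq
  have hb : 0 < y / (z + √(z^2+y^2)) := by positivity
  have := h1.rpow_const (p := 2*s) (Or.inl hb.ne')
  unfold Qf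
  refine HasDerivAt.congr_deriv (this) ?_
  rw [Real.rpow_sub_one hb.ne']
  field_simp

lemma Qf_nonneg {s z y : ℝ} (hz : 0 ≤ z) (hy : 0 ≤ y) : 0 ≤ Qf s z y := by
  unfold Qf; positivity

lemma Qf_le_one {s z y : ℝ} (hs : 0 < s) (hz : 0 ≤ z) (hy : 0 ≤ y) : Qf s z y ≤ 1 := by
  unfold Qf
  apply Real.rpow_le_one (by positivity) _ (by positivity)
  apply div_le_one_of_le₀ _ (by positivity)
  have : y ≤ √(z^2+y^2) := Real.le_sqrt_of_sq_le (by nlinarith [sq_nonneg z])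
  linarith

/-- barrier -/
def Phi (s α z y : ℝ) : ℝ := z ^ α * (5 - Qf s z y)

lemma Phi_super {s α z y : ℝ} (hs : 0 < s) (hs' : s < 1/2) (ha : 0 < α) (ha' : α ≤ 1/4)
    (hz : 0 < z) (hy : 0 < y) :
    ∃ (gz gy : ℝ → ℝ) (cz cy : ℝ), (∀ᶠ w in 𝓝 z, HasDerivAt (fun w => Phi s α w y) (gz w) w) ∧
      HasDerivAt gz cz z ∧ (∀ᶠ w in 𝓝 y, HasDerivAt (fun w => Phi s α z w) (gy w) w) ∧
      HasDerivAt gy cy y ∧ cz + cy + ((1-2*s)/y) * gy y ≤ -α * z ^ (α - 2) := by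
  have hr := rho_pos (z := z) hy
  have hq := rho_sq z y
  have hge := rho_ge (z := z) (y := y)
  have hQ0 : 0 ≤ Qf s z y := Qf_nonneg hz.le hy.le
  have hQ1 : Qf s z y ≤ 1 := Qf_le_one hs hz.le hy.le
  have key1 : ∀ w > 0, HasDerivAt (fun w => Phi s α w y)
      (α * w^(α-1) * (5 - Qf s w y) + w^α * ((2*s) * Qf s w y / √(w^2+y^2))) w := by
    intro w hw
    have := (Real.hasDerivAt_rpow_const (p := α) (Or.inl hw.ne')).fun_mul
      ((Qf_dz (s := s) hw hy).const_sub 5)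
    unfold Phi
    refine HasDerivAt.congr_deriv (this) ?_
    ring
  have key2 : ∀ w > 0, HasDerivAt (fun w => Phi s α z w)
      (-(z^α * (2*s * Qf s z w * (z / (√(z^2+w^2) * w))))) w := by
    intro w hw
    have := ((Qf_dy (s := s) hz hw).const_sub 5).const_mul (z^α)
    unfold Phi
    refine HasDerivAt.congr_deriv (this) ?_
    ring
  have dz2 : HasDerivAt (fun w => (2*s) * Qf s w y / √(w^2+y^2))
      (-(4*s^2/√(z^2+y^2)^2 + 2*s*z/√(z^2+y^2)^3) * Qf s z y) z := by
    refine HasDerivAt.congr_deriv (((Qf_dz (s := s) hz hy).const_mul (2*s)).fun_div (rho_dz hy) hr.ne') ?_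
    field_simp
    ring
  have dy2 : HasDerivAt (fun w => 2*s * Qf s z w * (z / (√(z^2+w^2) * w)))
      ((4*s^2*z^2/(√(z^2+y^2)^2*y^2) + 2*s*(-z/(√(z^2+y^2)*y^2) - z/√(z^2+y^2)^3)) * Qf s z y) y := by
    have h1 : HasDerivAt (fun w => z / (√(z^2+w^2) * w))
       (-z/(√(z^2+y^2)*y^2) - z/√(z^2+y^2)^3) y := by
      refine HasDerivAt.congr_deriv ((hasDerivAt_const y z).fun_div ((rho_dy (z := z) hy).fun_mul (hasDerivAt_id' y)) (by positivity)) ?_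
      · field_simp; ring
    refine HasDerivAt.congr_deriv (((Qf_dy (s := s) hz hy).const_mul (2*s)).fun_mul h1) ?_
    field_simp
    ring
  have key3 := (((Real.hasDerivAt_rpow_const (p := α-1) (Or.inl hz.ne')).const_mul α).fun_mul
      ((Qf_dz (s := s) hz hy).const_sub 5)).fun_add
      ((Real.hasDerivAt_rpow_const (p := α) (Or.inl hz.ne')).fun_mul dz2)
  have key4 := (dy2.const_mul (z^α)).fun_neg
  refine ⟨_, _, _, _, (lt_mem_nhds hz).mono key1, key3, (lt_mem_nhds hy).mono key2, key4, ?_⟩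
  have e1 : z^(α-1) = z^(α-2) * z := by
    rw [← Real.rpow_add_one hz.ne']; ring_nf
  have e2 : z^α = z^(α-2) * z * z := by
    rw [← Real.rpow_add_one hz.ne', ← Real.rpow_add_one hz.ne']; ring_nf
  have e3 : z^(α-1-1) = z^(α-2) := by ring_nf
  rw [e3, e1, e2]
  have hp : 0 < z^(α-2) := by positivity
  generalize z^(α-2) = P at *
  generalize Qf s z y = Q at *
  generalize √(z^2+y^2) = r at *
  have h : (4*s^2/r^2 + 2*s*z/r^3) + (4*s^2*z^2/(r^2*y^2) + 2*s*(-z/(r*y^2) - z/r^3))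
     + (1-2*s)/y * (2*s*(z/(r*y))) = 4*s^2*(1 - z/r)/y^2 := by
    field_simp
    linear_combination (-4*s*r) * hq
  have hzr : z / r ≤ 1 := div_le_one_of_le₀ hge hr.le
  have hzr0 : 0 ≤ z / r := by positivity
  have hnn : 0 ≤ 4*s^2*(1 - z/r)/y^2 := by
    have : 0 ≤ 1 - z/r := by linarith
    positivity
  have goal : P * (α*(α-1)*(5-Q) + 4*α*s*Q*(z/r) - z^2*Q*(4*s^2*(1 - z/r)/y^2)) ≤ -α * P := by
    have h1 : 0 ≤ z^2*Q*(4*s^2*(1 - z/r)/y^2) := by positivity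
    have h2 : s*Q*(z/r) ≤ 1/2*1*1 := by gcongr
    have h3 : (α-1)*(5-Q) ≤ -3 := by nlinarith
    have h4 : α*((α-1)*(5-Q)) ≤ α * (-3) := by gcongr
    have h5 : α*(4*(s*Q*(z/r))) ≤ α*(4*(1/2*1*1)) := by gcongr
    have : (α*(α-1)*(5-Q) + 4*α*s*Q*(z/r) - z^2*Q*(4*s^2*(1 - z/r)/y^2)) ≤ -α := by linarith
    nlinarith
  refine le_trans (le_of_eq ?_) goal
  rw [← h]
  field_simp
  ring


lemma isOpen_halfBall (n : ℕ) (r : ℝ) : IsOpen (halfBall n r) := by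
  have h1 : IsOpen {p : En n × ℝ | ‖p.1‖ ^ 2 + p.2 ^ 2 < r ^ 2} :=
    isOpen_lt (by fun_prop) (by fun_prop)
  have h2 : IsOpen {p : En n × ℝ | 0 < p.2} := isOpen_lt (by fun_prop) (by fun_prop)
  exact h1.inter h2

lemma norm_refl' {n : ℕ} {e : En n} (he : ‖e‖ = 1) (v : En n) : ‖refl' e v‖ ^ 2 = ‖v‖ ^ 2 := by
  unfold refl'
  rw [norm_sub_sq_real, norm_smul, inner_smul_right, he, real_inner_comm]
  rw [mul_pow, Real.norm_eq_abs, sq_abs]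
  ring

lemma quad_line {n : ℕ} (c v : En n) (σ : ℝ) :
    ‖c + σ • v‖ ^ 2 = ‖c‖ ^ 2 + 2 * inner ℝ c v * σ + ‖v‖ ^ 2 * σ ^ 2 := by
  rw [norm_add_sq_real, norm_smul, inner_smul_right, mul_pow]
  simp
  ring

lemma poly_d (A B C σ : ℝ) : HasDerivAt (fun σ => A + B * σ + C * σ ^ 2) (B + 2 * C * σ) σ := by
  have := (((hasDerivAt_id' σ).const_mul B).const_add A).fun_add
    ((hasDerivAt_pow 2 σ).const_mul C)
  refine this.congr_deriv ?_
  simp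
  ring

lemma poly_d' (B C : ℝ) : HasDerivAt (fun σ => B + 2 * C * σ) (2 * C) 0 := by
  simpa using ((hasDerivAt_id' (0:ℝ)).const_mul (2 * C)).const_add B

lemma x_interior {n : ℕ} {s α m k : ℝ} (hs : 0 < s) (hs' : s < 1/2) (ha : 0 < α) (ha' : α ≤ 1/4)
    (hm : 0 ≤ m) (hk : 0 ≤ k) {w : En n × ℝ → ℝ} (hw : IsAHarmonicOn (1-2*s) w (halfBall n 1))
    {x x' xb : En n} {y yb : ℝ} (hyb : 0 ≤ yb) (hx : (x, y) ∈ halfBall n 1)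
    (hx' : (x', y) ∈ halfBall n 1) (hne : x ≠ x')
    (hmax : ∀ᶠ q : En n × En n × ℝ in 𝓝 (x, x', y),
      w (q.1, q.2.2) - w (q.2.1, q.2.2) - m * Phi s α (‖q.1 - q.2.1‖/2) q.2.2
        - k * (‖q.1 - xb‖^2 + ‖q.2.1 - xb‖^2 + (q.2.2 - yb)^2) ≤
      w (x, y) - w (x', y) - m * Phi s α (‖x - x'‖/2) y
        - k * (‖x - xb‖^2 + ‖x' - xb‖^2 + (y - yb)^2)) :
    m * (α * (‖x - x'‖/2) ^ (α - 2)) ≤ k * (4 * n + 4) := by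
  have hy : 0 < y := hx.2
  have hr : 0 < ‖x - x'‖ := norm_pos_iff.2 (sub_ne_zero.2 hne)
  obtain ⟨e, he, hxe⟩ : ∃ e : En n, ‖e‖ = 1 ∧ x - x' = ‖x - x'‖ • e := by
    refine ⟨‖x - x'‖⁻¹ • (x - x'), ?_, ?_⟩
    · rw [norm_smul]; simp [hr.ne']
    · rw [smul_smul]; simp [hr.ne']
  set r := ‖x - x'‖ with hrdef
  have hz : 0 < r / 2 := by positivity
  obtain ⟨gz, gy, cz, cy, hz1, hz2, hy1, hy2, hsup⟩ := Phi_super hs hs' ha ha' hz hy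
  have hΩ := isOpen_halfBall n 1
  -- directional tests
  have test : ∀ i : Fin n, D2 w (x, y) (EuclideanSpace.single i 1, 0)
      - D2 w (x', y) (refl' e (EuclideanSpace.single i 1), 0) - m * (e i ^ 2 * cz) - k * 4 ≤ 0 := by
    intro i
    set v : En n := EuclideanSpace.single i 1 with hv
    set v' := refl' e v with hv'
    have hin : inner ℝ e v = e i := by simp [hv, EuclideanSpace.inner_single_right]
    have hnv : ‖v‖ ^ 2 = 1 := by simp [hv]
    have hnv' : ‖v'‖ ^ 2 = 1 := by rw [hv', norm_refl' he, hnv]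
    obtain ⟨l1, l2⟩ := line_deriv hΩ hw.1 hx (v, 0)
    obtain ⟨l3, l4⟩ := line_deriv hΩ hw.1 hx' (v', 0)
    have hl : ∀ σ : ℝ, HasDerivAt (fun σ : ℝ => r/2 + σ * e i) (e i) σ := fun σ => by
      simpa using ((hasDerivAt_id σ).mul_const (e i)).const_add (r/2)
    have p1 : ∀ᶠ σ in 𝓝 (0:ℝ), HasDerivAt (fun σ => Phi s α (r/2 + σ * e i) y)
        (gz (r/2 + σ * e i) * e i) σ := by
      have hc := (hl 0).continuousAt
      have : ∀ᶠ σ in 𝓝 (0:ℝ), HasDerivAt (fun w => Phi s α w y) (gz (r/2 + σ * e i))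
          (r/2 + σ * e i) := by
        have hc' : Tendsto (fun σ : ℝ => r/2 + σ * e i) (𝓝 0) (𝓝 (r/2)) := by
          simpa [ContinuousAt] using hc
        exact hc'.eventually hz1
      filter_upwards [this] with σ hσ
      exact hσ.comp σ (hl σ)
    have p2 : HasDerivAt (fun σ => gz (r/2 + σ * e i) * e i) (e i ^ 2 * cz) 0 := by
      have h0 : HasDerivAt gz cz (r/2 + 0 * e i) := by simpa using hz2
      have := (h0.comp (0:ℝ) (hl 0)).mul_const (e i)
      refine this.congr_deriv (by ring)
    let A := ‖x - xb‖^2 + ‖x' - xb‖^2 + (y - yb)^2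
    let B := 2 * inner ℝ (x - xb) v + 2 * inner ℝ (x' - xb) v'
    have key := second_test (g := fun σ => w ((x, y) + σ • (v, (0:ℝ))) - w ((x', y) + σ • (v', (0:ℝ)))
        - m * Phi s α (r/2 + σ * e i) y - k * (A + B * σ + 2 * σ ^ 2))
        (g' := fun σ => fderiv ℝ w ((x, y) + σ • (v, (0:ℝ))) (v, 0)
          - fderiv ℝ w ((x', y) + σ • (v', (0:ℝ))) (v', 0)
          - m * (gz (r/2 + σ * e i) * e i) - k * (B + 2 * 2 * σ))
        (c := D2 w (x, y) (v, 0) - D2 w (x', y) (v', 0) - m * (e i ^ 2 * cz) - k * (2 * 2))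
        (by
          filter_upwards [l1, l3, p1] with σ h1 h3 h5
          exact ((h1.fun_sub h3).fun_sub (h5.const_mul m)).fun_sub ((poly_d A B 2 σ).const_mul k))
        (((l2.fun_sub l4).fun_sub (p2.const_mul m)).fun_sub ((poly_d' B 2).const_mul k))
        (by
          have ht : Tendsto (fun σ : ℝ => (x + σ • v, x' + σ • v', y)) (𝓝 0) (𝓝 (x, x', y)) := by
            have : Continuous (fun σ : ℝ => (x + σ • v, x' + σ • v', y)) := by fun_prop
            simpa using this.tendsto 0
          have hpos : ∀ᶠ σ in 𝓝 (0:ℝ), 0 < r/2 + σ * e i := by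
            have := (hl 0).continuousAt
            refine this.eventually_const_lt ?_
            simpa using hz
          filter_upwards [ht.eventually hmax, hpos] with σ h1 h2
          have hd : (x + σ • v) - (x' + σ • v') = (2 * (r/2 + σ * e i)) • e := by
            have : (x + σ • v) - (x' + σ • v') = (x - x') + σ • (v - v') := by
              rw [smul_sub]; abel
            rw [this, hxe, hv']
            unfold refl'
            rw [hin]
            module
          have hnorm : ‖(x + σ • v) - (x' + σ • v')‖ / 2 = r/2 + σ * e i := by
            rw [hd, norm_smul, he, Real.norm_of_nonneg (by linarith)]; ring
          have q1 : ‖x + σ • v - xb‖^2 = ‖x - xb‖^2 + 2 * inner ℝ (x - xb) v * σ + σ^2 := by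
            have := quad_line (x - xb) v σ
            rw [hnv, one_mul] at this
            rw [← this]; congr 2; abel
          have q2 : ‖x' + σ • v' - xb‖^2 = ‖x' - xb‖^2 + 2 * inner ℝ (x' - xb) v' * σ + σ^2 := by
            have := quad_line (x' - xb) v' σ
            rw [hnv', one_mul] at this
            rw [← this]; congr 2; abel
          rw [hnorm, q1, q2] at h1
          simp only [Prod.smul_mk, smul_zero, Prod.mk_add_mk, add_zero, zero_smul, zero_mul]
          refine le_trans (le_of_eq ?_) (h1.trans (le_of_eq ?_))
          · simp only [A, B]; ring
          · simp only [A]; ring)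
    linarith [key.2]
  have testy := by
    obtain ⟨l1, l2⟩ := line_deriv hΩ hw.1 hx (0, 1)
    obtain ⟨l3, l4⟩ := line_deriv hΩ hw.1 hx' (0, 1)
    have hl : ∀ σ : ℝ, HasDerivAt (fun σ : ℝ => y + σ) 1 σ := fun σ => by
      simpa using (hasDerivAt_id σ).const_add y
    have p1 : ∀ᶠ σ in 𝓝 (0:ℝ), HasDerivAt (fun σ => Phi s α (r/2) (y + σ)) (gy (y + σ)) σ := by
      have hc' : Tendsto (fun σ : ℝ => y + σ) (𝓝 0) (𝓝 y) := by
        simpa [ContinuousAt] using (hl 0).continuousAt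
      filter_upwards [hc'.eventually hy1] with σ hσ
      exact (hσ.comp σ (hl σ)).congr_deriv (by ring)
    have p2 : HasDerivAt (fun σ => gy (y + σ)) cy 0 := by
      have h0 : HasDerivAt gy cy (y + 0) := by simpa using hy2
      exact (h0.comp (0:ℝ) (hl 0)).congr_deriv (by ring)
    let A := ‖x - xb‖^2 + ‖x' - xb‖^2 + (y - yb)^2
    exact second_test (g := fun σ => w ((x, y) + σ • ((0:En n), (1:ℝ)))
          - w ((x', y) + σ • ((0:En n), (1:ℝ)))
        - m * Phi s α (r/2) (y + σ) - k * (A + (2 * (y - yb)) * σ + 1 * σ ^ 2))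
        (g' := fun σ => fderiv ℝ w ((x, y) + σ • ((0:En n), (1:ℝ))) (0, 1)
          - fderiv ℝ w ((x', y) + σ • ((0:En n), (1:ℝ))) (0, 1)
          - m * (gy (y + σ)) - k * ((2 * (y - yb)) + 2 * 1 * σ))
        (c := D2 w (x, y) (0, 1) - D2 w (x', y) (0, 1) - m * cy - k * (2 * 1))
        (by
          filter_upwards [l1, l3, p1] with σ h1 h3 h5
          exact ((h1.fun_sub h3).fun_sub (h5.const_mul m)).fun_sub ((poly_d A _ 1 σ).const_mul k))
        (((l2.fun_sub l4).fun_sub (p2.const_mul m)).fun_sub ((poly_d' _ 1).const_mul k))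
        (by
          have ht : Tendsto (fun σ : ℝ => (x, x', y + σ)) (𝓝 0) (𝓝 (x, x', y)) := by
            have : Continuous (fun σ : ℝ => (x, x', y + σ)) := by fun_prop
            simpa using this.tendsto 0
          filter_upwards [ht.eventually hmax] with σ h1
          simp only [Prod.smul_mk, smul_zero, Prod.mk_add_mk, add_zero, smul_eq_mul, mul_one]
          refine le_trans (le_of_eq ?_) (h1.trans (le_of_eq ?_))
          · simp only [A]; ring
          · simp only [A]; ring)
  obtain ⟨ty1, ty2⟩ := testy
  simp only [zero_smul, add_zero, mul_zero] at ty1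
  have hsum := Finset.sum_nonpos (fun i (_ : i ∈ Finset.univ) => test i)
  have hsq : ∑ i : Fin n, e i ^ 2 = 1 := by
    have := EuclideanSpace.real_norm_sq_eq e
    rw [he] at this; simpa using this.symm
  have htr : ∑ i : Fin n, D2 w (x', y) (refl' e (EuclideanSpace.single i 1), 0)
      = ∑ i : Fin n, D2 w (x', y) (EuclideanSpace.single i 1, 0) := by
    have := trace_refl ((fderiv ℝ (fderiv ℝ w) (x', y)).bilinearComp
      (ContinuousLinearMap.inl ℝ (En n) ℝ) (ContinuousLinearMap.inl ℝ (En n) ℝ)) e he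
    simp_rw [D2_bilin hΩ hw.1 hx']
    simpa using this
  simp only [Finset.sum_sub_distrib, htr, ← Finset.mul_sum, ← Finset.sum_mul, hsq,
    Finset.sum_const, Finset.card_univ, Fintype.card_fin, nsmul_eq_mul] at hsum
  have e1 := hw.2 _ hx
  have e2 := hw.2 _ hx'
  unfold lap at e1 e2
  dsimp only at e1 e2
  have hay : (1-2*s)/y * (y - yb) ≤ 1 := by
    rw [div_mul_eq_mul_div, div_le_one hy]
    nlinarith
  have hms := mul_le_mul_of_nonneg_left hsup hm
  have hka := mul_le_mul_of_nonneg_left hay hk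
  have : (1-2*s)/y * (fderiv ℝ w (x, y) (0, 1) - fderiv ℝ w (x', y) (0, 1))
      = (1-2*s)/y * (m * gy y + k * (2 * (y - yb))) := by
    congr 1; linarith
  nlinarith


/-- working version of the solution hypotheses -/
structure Sol {n : ℕ} (s M V : ℝ) (b : ℝ → En n → En n) (f : ℝ → En n → ℝ)
    (u : ℝ → En n × ℝ → ℝ) : Prop where
  Vpos : 0 < V
  cont : ContinuousOn (fun q : ℝ × (En n × ℝ) => u q.1 q.2) (Icc (-1 : ℝ) 0 ×ˢ closedHalfBall n 1)
  harm : ∀ t ∈ Icc (-1 : ℝ) 0, IsAHarmonicOn (1-2*s) (u t) (halfBall n 1)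
  base : ∀ t ∈ Ioc (-1 : ℝ) 0, ∀ x ∈ flatBall n 1, ∃ L, NormalDerivLimit (1-2*s) (u t) x L ∧
    HasDerivWithinAt (fun σ : ℝ => u (t+σ) (x + σ • b t x, 0)) (f t x + L) (Iic 0) 0
  bd : ∀ t ∈ Icc (-1 : ℝ) 0, ∀ p ∈ halfBallWithBase n 1, |u t p| ≤ V
  fb : ∀ t ∈ Icc (-1 : ℝ) 0, ∀ x ∈ flatBall n 1, |f t x| ≤ V
  bb : ∀ t ∈ Icc (-1 : ℝ) 0, ∀ x ∈ flatBall n 1, ‖b t x‖ ≤ M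
  bh : ∀ t ∈ Icc (-1 : ℝ) 0, ∀ x ∈ flatBall n 1, ∀ x' ∈ flatBall n 1,
          ‖b t x - b t x'‖ ≤ M * ‖x - x'‖ ^ (1 - 2*s)

lemma mem_nhds_base {n : ℕ} {x : En n} (hx : ‖x‖ < 1) :
    ∀ᶠ y in 𝓝[>] (0:ℝ), (x, y) ∈ halfBall n 1 := by
  have h1 : ∀ᶠ y in 𝓝 (0:ℝ), ‖x‖^2 + y^2 < 1^2 := by
    have : Continuous (fun y : ℝ => ‖x‖^2 + y^2) := by fun_prop
    refine this.continuousAt.eventually_lt_const ?_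
    simp
    nlinarith [norm_nonneg x]
  filter_upwards [nhdsWithin_le_nhds h1, self_mem_nhdsWithin] with y h1 h2
  exact ⟨h1, h2⟩

lemma hb_sub {n : ℕ} {p : En n × ℝ} (h : p ∈ halfBall n 1) : p ∈ halfBallWithBase n 1 :=
  ⟨h.1, h.2.le⟩

lemma hbb_sub {n : ℕ} {p : En n × ℝ} (h : p ∈ halfBallWithBase n 1) : p ∈ closedHalfBall n 1 :=
  ⟨h.1.le, h.2⟩

lemma cont_base {n : ℕ} {u : ℝ → En n × ℝ → ℝ}
    (hc : ContinuousOn (fun q : ℝ × (En n × ℝ) => u q.1 q.2) (Icc (-1 : ℝ) 0 ×ˢ closedHalfBall n 1))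
    {t : ℝ} (ht : t ∈ Icc (-1 : ℝ) 0) {x : En n} (hx : ‖x‖ < 1) :
    Tendsto (fun y => u t (x, y)) (𝓝[>] 0) (𝓝 (u t (x, 0))) := by
  have h0 : (t, (x, (0:ℝ))) ∈ Icc (-1 : ℝ) 0 ×ˢ closedHalfBall n 1 := by
    refine ⟨ht, ?_, le_refl _⟩
    simp
    nlinarith [norm_nonneg x]
  have := hc _ h0
  have h2 : Tendsto (fun y : ℝ => (t, (x, y))) (𝓝[>] 0)
      (𝓝[Icc (-1 : ℝ) 0 ×ˢ closedHalfBall n 1] (t, (x, 0))) := by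
    apply tendsto_nhdsWithin_of_tendsto_nhds_of_eventually_within
    · have : Continuous (fun y : ℝ => (t, (x, y))) := by fun_prop
      exact (this.tendsto 0).mono_left nhdsWithin_le_nhds
    · filter_upwards [mem_nhds_base hx] with y hy
      exact ⟨ht, hbb_sub (hb_sub hy)⟩
  exact this.tendsto.comp h2

lemma Sol.dy {n : ℕ} {s M V : ℝ} {b : ℝ → En n → En n} {f : ℝ → En n → ℝ}
    {u : ℝ → En n × ℝ → ℝ} (S : Sol s M V b f u) {t : ℝ} (ht : t ∈ Icc (-1 : ℝ) 0) {x : En n}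
    {y : ℝ} (h : (x, y) ∈ halfBall n 1) :
    HasDerivAt (fun y => u t (x, y)) (fderiv ℝ (u t) (x, y) (0, 1)) y := by
  have hd : DifferentiableAt ℝ (u t) (x, y) :=
    (((S.harm t ht).1.contDiffAt ((isOpen_halfBall n 1).mem_nhds h)).differentiableAt (by norm_num))
  have hl : HasDerivAt (fun y : ℝ => (x, y)) ((0 : En n), (1:ℝ)) y :=
    (hasDerivAt_const y x).prodMk (hasDerivAt_id y)
  exact hd.hasFDerivAt.comp_hasDerivAt y hl

lemma Sol.of {n : ℕ} {s M V U0 F : ℝ} {b : ℝ → En n → En n} {f : ℝ → En n → ℝ}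
    {u : ℝ → En n × ℝ → ℝ} (hV : 0 < V) (hU : U0 ≤ V) (hF : F ≤ V)
    (hb : ∀ t ∈ Icc (-1 : ℝ) 0, (∀ x ∈ flatBall n 1, ‖b t x‖ ≤ M) ∧
        ∀ x ∈ flatBall n 1, ∀ x' ∈ flatBall n 1,
          ‖b t x - b t x'‖ ≤ M * ‖x - x'‖ ^ (1 - 2*s))
    (hf : ∀ t ∈ Icc (-1 : ℝ) 0, ∀ x ∈ flatBall n 1, |f t x| ≤ F)
    (hu : IsExtDDSolution (1 - 2*s) b f u)
    (hub : ∀ t ∈ Icc (-1 : ℝ) 0, ∀ p ∈ halfBall n 1, |u t p| ≤ U0) : Sol s M V b f u where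
  Vpos := hV
  cont := hu.1
  harm := hu.2.1
  base := by
    intro t ht x hx
    obtain ⟨L, hL, heq⟩ := hu.2.2.2 t x ⟨ht, hx⟩
    refine ⟨L, hL, ?_⟩
    have hd := (hu.2.2.1 (t, x) ⟨ht, hx⟩).hasFDerivWithinAt
    have hl : HasDerivWithinAt (fun σ : ℝ => (t + σ, x + σ • b t x)) (1, b t x) (Iic 0) 0 := by
      have h1 : HasDerivAt (fun σ : ℝ => t + σ) 1 0 := by
        simpa using (hasDerivAt_id (0:ℝ)).const_add t
      have h2 : HasDerivAt (fun σ : ℝ => x + σ • b t x) (b t x) 0 := by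
        simpa using ((hasDerivAt_id (0:ℝ)).smul_const (b t x)).const_add x
      exact (h1.prodMk h2).hasDerivWithinAt
    have hev : ∀ᶠ σ in 𝓝[Iic 0] (0:ℝ), (t + σ, x + σ • b t x) ∈ Ioc (-1 : ℝ) 0 ×ˢ flatBall n 1 := by
      have h1 : ∀ᶠ σ in 𝓝 (0:ℝ), -1 < t + σ := by
        have : Continuous (fun σ : ℝ => t + σ) := by fun_prop
        refine this.continuousAt.eventually_const_lt ?_
        simpa using ht.1
      have h2 : ∀ᶠ σ in 𝓝 (0:ℝ), ‖x + σ • b t x‖ < 1 := by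
        have : Continuous (fun σ : ℝ => ‖x + σ • b t x‖) := by fun_prop
        refine this.continuousAt.eventually_lt_const ?_
        have hx2 : ‖x‖ < 1 := hx
        simpa using hx2
      filter_upwards [nhdsWithin_le_nhds h1, nhdsWithin_le_nhds h2, self_mem_nhdsWithin]
        with σ a1 a2 a3
      have a3 : σ ≤ 0 := a3
      exact ⟨⟨a1, by linarith [ht.2]⟩, a2⟩
    have hd' : HasFDerivWithinAt (bdryFun u)
        (fderivWithin ℝ (bdryFun u) (Ioc (-1 : ℝ) 0 ×ˢ flatBall n 1) (t, x))
        (Ioc (-1 : ℝ) 0 ×ˢ flatBall n 1) (t + 0, x + (0:ℝ) • b t x) := by simpa using hd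
    set W := {σ : ℝ | (t + σ, x + σ • b t x) ∈ Ioc (-1 : ℝ) 0 ×ˢ flatBall n 1} with hW
    have hcomp := hd'.comp_hasDerivWithinAt (s := Iic 0 ∩ W) (0:ℝ)
      (hl.mono inter_subset_left) (fun σ hσ => hσ.2)
    have hcomp2 : HasDerivWithinAt (bdryFun u ∘ fun σ : ℝ => (t + σ, x + σ • b t x))
      (fderivWithin ℝ (bdryFun u) (Ioc (-1 : ℝ) 0 ×ˢ flatBall n 1) (t, x) (1, b t x)) (Iic 0) 0 := by
      refine hcomp.mono_of_mem_nhdsWithin ?_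
      exact inter_mem self_mem_nhdsWithin hev
    have : fderivWithin ℝ (bdryFun u) (Ioc (-1 : ℝ) 0 ×ˢ flatBall n 1) (t, x) (1, b t x)
        = f t x + L := by
      have e : ((1:ℝ), b t x) = (1, 0) + (0, b t x) := by simp
      rw [e, map_add]; linarith
    rw [this] at hcomp2
    exact hcomp2
  bd := by
    intro t ht p hp
    rcases hp.2.lt_or_eq with h | h
    · exact (hub t ht p ⟨hp.1, h⟩).trans hU
    · obtain ⟨x, y⟩ := p
      simp only at h
      subst h
      have hx : ‖x‖ < 1 := by
        have := hp.1
        simp only at this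
        nlinarith [norm_nonneg x]
      refine le_of_tendsto (cont_base hu.1 ht hx).abs ?_
      filter_upwards [mem_nhds_base hx] with y hy
      exact (hub t ht _ hy).trans hU
  fb := fun t ht x hx => (hf t ht x hx).trans hF
  bb := fun t ht => (hb t ht).1
  bh := fun t ht => (hb t ht).2

lemma IsExtDDSolution.neg {n : ℕ} {a : ℝ} {b : ℝ → En n → En n} {f : ℝ → En n → ℝ}
    {u : ℝ → En n × ℝ → ℝ} (h : IsExtDDSolution a b f u) :
    IsExtDDSolution a b (fun t x => - f t x) (fun t p => - u t p) := by
  obtain ⟨h1, h2, h3, h4⟩ := h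
  have hb : bdryFun (fun t p => - u t p) = fun q => - bdryFun u q := rfl
  have hfd : ∀ (w : En n × ℝ → ℝ), fderiv ℝ (fun p => - w p) = fun p => - fderiv ℝ w p := by
    intro w; funext p; exact fderiv_fun_neg
  refine ⟨h1.neg, ?_, ?_, ?_⟩
  · intro t ht
    refine ⟨(h2 t ht).1.neg, ?_⟩
    intro p hp
    have := (h2 t ht).2 p hp
    have hD2 : ∀ v, D2 (fun p => - u t p) p v = - D2 (u t) p v := by
      intro v
      unfold D2
      rw [hfd]
      simp only [ContinuousLinearMap.neg_apply]
      rw [fderiv_fun_neg]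
      simp
    unfold lap at *
    simp only [hD2, hfd, ContinuousLinearMap.neg_apply, Finset.sum_neg_distrib]
    linarith
  · intro q hq
    rw [hb]
    exact (h3 q hq).neg
  · intro t x hq
    obtain ⟨L, hL, e⟩ := h4 t x hq
    refine ⟨-L, ?_, ?_⟩
    · unfold NormalDerivLimit at *
      simp only [hfd, ContinuousLinearMap.neg_apply, mul_neg]
      exact hL.neg
    · rw [hb]
      have : fderivWithin ℝ (fun q => - bdryFun u q) (Ioc (-1 : ℝ) 0 ×ˢ flatBall n 1) (t, x)
        = - fderivWithin ℝ (bdryFun u) (Ioc (-1 : ℝ) 0 ×ˢ flatBall n 1) (t, x) :=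
        (h3 (t, x) hq).hasFDerivWithinAt.neg.fderivWithin (by
          apply UniqueDiffWithinAt.prod
          · exact (uniqueDiffOn_Ioc _ _) _ hq.1
          · apply IsOpen.uniqueDiffWithinAt _ hq.2
            exact isOpen_lt continuous_norm continuous_const)
      rw [this]
      simp only [ContinuousLinearMap.neg_apply]
      linarith

lemma max_exists {X : Type*} [TopologicalSpace X] [T2Space X] {K : Set X} (hK : IsCompact K)
    {D Ψ : X → ℝ} (hD : ContinuousOn D K) (hΨ : ∀ q ∈ K, 0 ≤ Ψ q)
    (hΨc : ∀ q ∈ K, 0 < D q → ContinuousWithinAt Ψ K q) {p : X} (hp : p ∈ K)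
    (hpos : 0 < D p - Ψ p) :
    ∃ q ∈ K, 0 < D q - Ψ q ∧ 0 < D q ∧ ∀ q' ∈ K, D q' - Ψ q' ≤ D q - Ψ q := by
  set c := D p - Ψ p with hc
  have hcl : IsClosed (K ∩ D ⁻¹' Ici c) := hD.preimage_isClosed_of_isClosed hK.isClosed isClosed_Ici
  have hcomp : IsCompact (K ∩ D ⁻¹' Ici c) := hK.of_isClosed_subset hcl inter_subset_left
  have hpm : p ∈ K ∩ D ⁻¹' Ici c := ⟨hp, by
    show c ≤ D p
    linarith [hΨ p hp]⟩
  have hcont : ContinuousOn (fun q => D q - Ψ q) (K ∩ D ⁻¹' Ici c) := by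
    intro q hq
    have hq2 : c ≤ D q := hq.2
    exact ((hD q hq.1).sub (hΨc q hq.1 (by linarith))).mono inter_subset_left
  obtain ⟨q, hq, hmax⟩ := hcomp.exists_isMaxOn ⟨p, hpm⟩ hcont
  have hqp : c ≤ D q - Ψ q := hmax hpm
  have hq2 : c ≤ D q := hq.2
  refine ⟨q, hq.1, by linarith, by linarith, ?_⟩
  intro q' hq'
  by_cases h : c ≤ D q'
  · exact hmax ⟨hq', h⟩
  · push Not at h
    linarith [hΨ q' hq']


lemma Phi_zero {s α z : ℝ} (hs : 0 < s) : Phi s α z 0 = 5 * z ^ α := by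
  unfold Phi Qf
  rw [zero_div, Real.zero_rpow (by positivity)]
  ring

set_option maxHeartbeats 1000000 in
lemma x_base {n : ℕ} {s M V α m k : ℝ} {b : ℝ → En n → En n} {f : ℝ → En n → ℝ}
    {u : ℝ → En n × ℝ → ℝ} (S : Sol s M V b f u) (hs : 0 < s) (hs' : s < 1/2) (hM : 0 ≤ M)
    (ha : 0 < α) (ha1 : α ≤ 1) (ha' : α ≤ 2*s) (haM : 5*α*M ≤ s) (hm : 0 ≤ m) (hk : 0 ≤ k)
    {t tb yb : ℝ} {x x' xb : En n} (ht : t ∈ Ioc (-1:ℝ) 0) (hyb : 0 ≤ yb)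
    (hx : ‖x‖ < 1) (hx' : ‖x'‖ < 1) (hne : x ≠ x') (hr1 : ‖x - x'‖ ≤ 1)
    (h1 : ‖x - xb‖ ≤ 1/16) (h1' : ‖x' - xb‖ ≤ 1/16)
    (hA : ∀ᶠ y in 𝓝[>] (0:ℝ), u t (x, y) - u t (x', y) - m * Phi s α (‖x-x'‖/2) y
        - k * (‖x - xb‖^2 + ‖x' - xb‖^2 + (y - yb)^2 + (tb - t)) ≤
        u t (x, 0) - u t (x', 0) - m * Phi s α (‖x-x'‖/2) 0
        - k * (‖x - xb‖^2 + ‖x' - xb‖^2 + (0 - yb)^2 + (tb - t)))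
    (hB : ∀ᶠ σ in 𝓝[<] (0:ℝ), u (t+σ) (x + σ • b t x, 0) - u (t+σ) (x' + σ • b t x', 0)
        - m * Phi s α (‖(x + σ • b t x) - (x' + σ • b t x')‖/2) 0
        - k * (‖x + σ • b t x - xb‖^2 + ‖x' + σ • b t x' - xb‖^2 + (0 - yb)^2 + (tb - (t + σ))) ≤
        u t (x, 0) - u t (x', 0) - m * Phi s α (‖x-x'‖/2) 0
        - k * (‖x - xb‖^2 + ‖x' - xb‖^2 + (0 - yb)^2 + (tb - t))) :
    s * m / 2 ≤ 2 * V + k * (M/4 + 1) := by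
  have htI : t ∈ Icc (-1:ℝ) 0 := ⟨ht.1.le, ht.2⟩
  have hr : 0 < ‖x - x'‖ := norm_pos_iff.2 (sub_ne_zero.2 hne)
  obtain ⟨L, hL, hdL⟩ := S.base t ht x hx
  obtain ⟨L', hL', hdL'⟩ := S.base t ht x' hx'
  have hbx := S.bb t htI x hx
  have hbx' := S.bb t htI x' hx'
  have hbb := S.bh t htI x hx x' hx'
  have hfx := abs_le.1 (S.fb t htI x hx)
  have hfx' := abs_le.1 (S.fb t htI x' hx')
  set r := ‖x - x'‖ with hrdef
  set z := r / 2 with hz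
  have hzp : 0 < z := by positivity
  set w := M * r ^ (1 - 2*s) with hw
  have hw0 : 0 ≤ w := by positivity
  set P := z ^ α * ((2*z) ^ (2*s))⁻¹ with hP
  -- normal
  have N1 : L - L' ≤ 2*s*(-m * P + k * 0) := by
    refine lhop (s := s) hs (D := fun y => u t (x, y) - u t (x', y))
      (D' := fun y => fderiv ℝ (u t) (x, y) (0, 1) - fderiv ℝ (u t) (x', y) (0, 1))
      (G := fun y => -m * (z ^ α * ((z + √(z^2+y^2)) ^ (2*s))⁻¹) + k * y ^ (2 - 2*s)) ?_ ?_ ?_ ?_ ?_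
    · exact (cont_base S.cont htI hx).sub (cont_base S.cont htI hx')
    · filter_upwards [mem_nhds_base hx, mem_nhds_base hx'] with y hy hy'
      exact (S.dy htI hy).fun_sub (S.dy htI hy')
    · have := hL.sub hL'
      refine this.congr fun y => ?_
      ring
    · filter_upwards [hA, self_mem_nhdsWithin] with y hy hy0
      have hy0 : 0 < y := hy0
      rw [Phi_zero hs] at hy
      unfold Phi Qf at hy
      rw [Real.div_rpow hy0.le (by positivity)] at hy
      have e1 : y ^ (2*s) * y ^ (2 - 2*s) = y ^ 2 := by
        rw [← Real.rpow_add hy0]; norm_num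
      have e2 : y ^ (2*s) * (-m * (z ^ α * ((z + √(z^2+y^2)) ^ (2*s))⁻¹) + k * y ^ (2 - 2*s))
        = -m * (z ^ α * (y^(2*s) / (z + √(z^2+y^2)) ^ (2*s))) + k * y^2 := by
        rw [← e1]; ring
      rw [e2]
      nlinarith [mul_nonneg hk (mul_nonneg hy0.le hyb)]
    · have c1 : ContinuousAt (fun y : ℝ => -m * (z ^ α * ((z + √(z^2+y^2)) ^ (2*s))⁻¹)
          + k * y ^ (2 - 2*s)) 0 := by
        have d1 : ContinuousAt (fun y : ℝ => y ^ (2 - 2*s)) 0 :=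
          Real.continuousAt_rpow_const _ _ (Or.inr (by linarith))
        have d2 : ContinuousAt (fun y : ℝ => (z + √(z^2+y^2))) 0 := by fun_prop
        have d3 := d2.rpow_const (p := 2*s) (Or.inr (by positivity))
        have d4 := d3.inv₀ (by positivity)
        exact ((d4.const_mul (z^α)).const_mul (-m)).add (d1.const_mul k)
      have c2 := c1.tendsto.mono_left (nhdsWithin_le_nhds (s := Ioi 0))
      have e0 : √(z^2 + (0:ℝ)^2) = z := by
        rw [zero_pow two_ne_zero, add_zero, Real.sqrt_sq hzp.le]
      rw [e0, Real.zero_rpow (by linarith), ← two_mul] at c2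
      exact c2
  -- time
  set ρ := ‖x - xb‖ with hρ
  set ρ' := ‖x' - xb‖ with hρ'
  have T1 : 0 ≤ ((f t x + L) - (f t x' + L')) + 5/2 * m * α * z ^ (α - 1) * w
      + k * (2*ρ*M + 2*ρ'*M + 1) := by
    refine left_test (g := fun σ => u (t+σ) (x + σ • b t x, 0) - u (t+σ) (x' + σ • b t x', 0)
      - 5 * m * (z + (-w/2) * σ) ^ α - k * ((ρ - M * σ)^2 + (ρ' - M * σ)^2 + (0-yb)^2
        + (tb - (t + σ)))) ?_ ?_
    · have d1 : HasDerivAt (fun σ : ℝ => (z + (-w/2) * σ) ^ α) ((-w/2) * α * z ^ (α - 1)) 0 := by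
        have a1 : HasDerivAt (fun σ : ℝ => z + (-w/2) * σ) (-w/2) 0 := by
          simpa using ((hasDerivAt_id (0:ℝ)).const_mul (-w/2)).const_add z
        have := a1.rpow_const (p := α) (Or.inl (by simp; exact hzp.ne'))
        simpa using this
      have d2 : ∀ c : ℝ, HasDerivAt (fun σ : ℝ => (c - M * σ)^2) (-(2 * c * M)) 0 := by
        intro c
        have a1 : HasDerivAt (fun σ : ℝ => c - M * σ) (-M) 0 := by
          simpa using ((hasDerivAt_id (0:ℝ)).const_mul M).const_sub c
        have := a1.fun_pow 2
        refine this.congr_deriv ?_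
        simp
      have d3 : HasDerivAt (fun σ : ℝ => (tb - (t + σ))) (-1) 0 := by
        simpa using ((hasDerivAt_id (0:ℝ)).const_add t).const_sub tb
      have d4 := ((((d2 ρ).fun_add (d2 ρ')).add_const ((0-yb)^2)).fun_add d3).const_mul k
      have d5 := d1.const_mul (5*m)
      refine (((hdL.fun_sub hdL').fun_sub d5.hasDerivWithinAt).fun_sub d4.hasDerivWithinAt).congr_deriv ?_
      ring
    · filter_upwards [hB, self_mem_nhdsWithin] with σ h hσ
      have hσ : σ < 0 := hσ
      rw [Phi_zero hs, Phi_zero hs] at h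
      have hsm : ∀ v : En n, ‖σ • v‖ = (-σ) * ‖v‖ := fun v => by
        rw [norm_smul, Real.norm_eq_abs, abs_of_neg hσ]
      have n1 : ‖(x + σ • b t x) - (x' + σ • b t x')‖ / 2 ≤ z + (-w/2) * σ := by
        have : (x + σ • b t x) - (x' + σ • b t x') = (x - x') + σ • (b t x - b t x') := by
          rw [smul_sub]; abel
        rw [this]
        have := norm_add_le (x - x') (σ • (b t x - b t x'))
        rw [hsm] at this
        have mm := mul_le_mul_of_nonneg_left hbb (neg_nonneg.2 hσ.le)
        linarith
      have n2 : ‖x + σ • b t x - xb‖ ≤ ρ - M * σ := by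
        have : x + σ • b t x - xb = (x - xb) + σ • b t x := by abel
        rw [this]
        have := norm_add_le (x - xb) (σ • b t x)
        rw [hsm] at this
        have mm := mul_le_mul_of_nonneg_left hbx (neg_nonneg.2 hσ.le)
        linarith
      have n3 : ‖x' + σ • b t x' - xb‖ ≤ ρ' - M * σ := by
        have : x' + σ • b t x' - xb = (x' - xb) + σ • b t x' := by abel
        rw [this]
        have := norm_add_le (x' - xb) (σ • b t x')
        rw [hsm] at this
        have mm := mul_le_mul_of_nonneg_left hbx' (neg_nonneg.2 hσ.le)
        linarith
      have m1 := Real.rpow_le_rpow (by positivity) n1 ha.le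
      have m2 := pow_le_pow_left₀ (norm_nonneg _) n2 2
      have m3 := pow_le_pow_left₀ (norm_nonneg _) n3 2
      have m4 := mul_le_mul_of_nonneg_left m1 hm
      have m5 := mul_le_mul_of_nonneg_left (add_le_add m2 m3) hk
      simp only [add_zero, zero_smul, mul_zero, sub_zero]
      simp only [zero_sub] at h ⊢
      linarith
  have eP : z ^ (α - 1) * w = 2 * M * P := by
    rw [hw, hP, Real.rpow_sub hzp, show r = 2*z by rw [hz]; ring,
      Real.rpow_sub (by positivity), Real.rpow_one, Real.rpow_one]
    field_simp
  have P2 : 1/2 ≤ P := by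
    rw [hP, ← div_eq_mul_inv, le_div_iff₀ (by positivity)]
    have h2z : 2*z ≤ 1 := by rw [hz]; linarith
    have a1 : (2*z)^(2*s) ≤ (2*z)^α := Real.rpow_le_rpow_of_exponent_ge (by positivity) h2z ha'
    have a2 : (2*z)^α = 2^α * z^α := Real.mul_rpow (by norm_num) hzp.le
    have a3 : (2:ℝ)^α ≤ 2 := by
      calc (2:ℝ)^α ≤ 2^(1:ℝ) := Real.rpow_le_rpow_of_exponent_le (by norm_num) ha1
        _ = 2 := by simp
    have := mul_le_mul_of_nonneg_right a3 (Real.rpow_nonneg hzp.le α)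
    linarith
  have T2 : 5/2 * m * α * z ^ (α - 1) * w = 5 * α * M * (m * P) := by
    rw [mul_assoc, eP]; ring
  rw [T2] at T1
  have mP : m * (1/2) ≤ m * P := mul_le_mul_of_nonneg_left P2 hm
  have mP0 : 0 ≤ m * P := by linarith
  have q1 : 5*α*M*(m*P) ≤ s * (m * P) := mul_le_mul_of_nonneg_right haM mP0
  have q2 : k * (2*ρ*M + 2*ρ'*M + 1) ≤ k * (M/4 + 1) := by
    apply mul_le_mul_of_nonneg_left _ hk
    nlinarith
  have q3 : s * (m * (1/2)) ≤ s * (m * P) := mul_le_mul_of_nonneg_left mP hs.le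
  linarith


lemma ev_lt {X : Type*} [TopologicalSpace X] {g : X → ℝ} {q : X} {c : ℝ} (hc : ContinuousAt g q)
    (h : g q < c) : ∀ᶠ p in 𝓝 q, g p < c := hc.tendsto.eventually_lt_const h

lemma ev_gt {X : Type*} [TopologicalSpace X] {g : X → ℝ} {q : X} {c : ℝ} (hc : ContinuousAt g q)
    (h : c < g q) : ∀ᶠ p in 𝓝 q, c < g p := hc.tendsto.eventually_const_lt h

lemma geom {n : ℕ} {x xb : En n} {y : ℝ} (hb : ‖xb‖ ≤ 9/16) (h : ‖x - xb‖ ≤ 1/16) (hy : 0 ≤ y)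
    (hy' : y ≤ 9/16) : (x, y) ∈ halfBallWithBase n 1 := by
  refine ⟨?_, hy⟩
  have h1 : ‖x‖ ≤ 10/16 := by
    have : x = (x - xb) + xb := by abel
    rw [this]
    linarith [norm_add_le (x - xb) xb]
  dsimp only
  nlinarith [norm_nonneg x]

lemma Phi_nonneg {s α z y : ℝ} (hs : 0 < s) (hz : 0 ≤ z) (hy : 0 ≤ y) : 0 ≤ Phi s α z y := by
  unfold Phi
  have := Qf_le_one (s := s) hs hz hy
  have h2 : 0 ≤ z ^ α := Real.rpow_nonneg hz α
  exact mul_nonneg h2 (by linarith)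

lemma Phi_cont {s α : ℝ} (hs : 0 < s) (hα : 0 < α) {X : Type*} [TopologicalSpace X] {Z Y : X → ℝ}
    {q : X} (hZ : ContinuousAt Z q) (hY : ContinuousAt Y q) (hz : 0 < Z q) :
    ContinuousAt (fun q => Phi s α (Z q) (Y q)) q := by
  unfold Phi Qf
  have h1 : ContinuousAt (fun q => Z q ^ α) q := hZ.rpow_const (Or.inr hα.le)
  have h2 : ContinuousAt (fun q => Z q + √(Z q ^2 + Y q ^2)) q :=
    hZ.add ((hZ.pow 2).add (hY.pow 2)).sqrt
  have h3 := hY.div h2 (by positivity)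
  have h4 := h3.rpow_const (p := 2*s) (Or.inr (by positivity))
  exact h1.mul (continuousAt_const.sub h4)

set_option maxHeartbeats 1000000 in
lemma x_holder {n : ℕ} {s M V α N : ℝ} {b : ℝ → En n → En n} {f : ℝ → En n → ℝ}
    {u : ℝ → En n × ℝ → ℝ} (S : Sol s M V b f u) (hs : 0 < s) (hs' : s < 1/2) (hM : 0 ≤ M)
    (ha : 0 < α) (ha1 : α ≤ 1/4) (ha' : α ≤ 2*s) (haM : 5*α*M ≤ s) (hN : 0 ≤ N)
    (hN1 : 512 * (4 * n + 4) < N * α) (hN2 : 2 + 512 * (M/4+1) < N * s / 2)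
    {tb yb : ℝ} {x0 x0' xb : En n} (ht : tb ∈ Icc (-(1:ℝ)/2) 0) (hyb : yb ∈ Icc (0:ℝ) (1/2))
    (hxb : ‖xb‖ ≤ 9/16) (h1 : ‖x0 - xb‖ ≤ 1/16) (h1' : ‖x0' - xb‖ ≤ 1/16) :
    u tb (x0, yb) - u tb (x0', yb) ≤ N * V * Phi s α (‖x0 - x0'‖/2) yb
      + 512 * V * (‖x0 - xb‖^2 + ‖x0' - xb‖^2) := by
  have hV := S.Vpos
  by_contra hcon
  push Not at hcon
  set K : Set (ℝ × En n × En n × ℝ) := Icc (tb - 1/4) tb ×ˢ Metric.closedBall xb (1/16) ×ˢ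
    Metric.closedBall xb (1/16) ×ˢ Icc (max 0 (yb - 1/16)) (yb + 1/16) with hK
  have hKc : IsCompact K := isCompact_Icc.prod ((isCompact_closedBall _ _).prod
    ((isCompact_closedBall _ _).prod isCompact_Icc))
  have memK : ∀ q : ℝ × En n × En n × ℝ, q ∈ K ↔ (tb - 1/4 ≤ q.1 ∧ q.1 ≤ tb) ∧
      ‖q.2.1 - xb‖ ≤ 1/16 ∧ ‖q.2.2.1 - xb‖ ≤ 1/16 ∧ (0 ≤ q.2.2.2 ∧ yb - 1/16 ≤ q.2.2.2) ∧
        q.2.2.2 ≤ yb + 1/16 := by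
    intro q
    simp only [hK, mem_prod, mem_Icc, Metric.mem_closedBall, dist_eq_norm, max_le_iff]
  have inK : ∀ q ∈ K, q.1 ∈ Icc (-1:ℝ) 0 ∧ (q.2.1, q.2.2.2) ∈ halfBallWithBase n 1 ∧
      (q.2.2.1, q.2.2.2) ∈ halfBallWithBase n 1 := by
    intro q hq
    obtain ⟨⟨a1, a2⟩, a3, a4, ⟨a5, a6⟩, a7⟩ := (memK q).1 hq
    exact ⟨⟨by linarith [ht.1], by linarith [ht.2]⟩, geom hxb a3 a5 (by linarith [hyb.2]),
      geom hxb a4 a5 (by linarith [hyb.2])⟩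
  set D : ℝ × En n × En n × ℝ → ℝ := fun q => u q.1 (q.2.1, q.2.2.2) - u q.1 (q.2.2.1, q.2.2.2)
    with hD
  set Ψ : ℝ × En n × En n × ℝ → ℝ := fun q => N * V * Phi s α (‖q.2.1 - q.2.2.1‖/2) q.2.2.2
    + 512 * V * (‖q.2.1 - xb‖^2 + ‖q.2.2.1 - xb‖^2 + (q.2.2.2 - yb)^2 + (tb - q.1)) with hΨ
  have hPhi : ∀ q ∈ K, 0 ≤ N * V * Phi s α (‖q.2.1 - q.2.2.1‖/2) q.2.2.2 := by
    intro q hq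
    have := Phi_nonneg (α := α) hs (z := ‖q.2.1 - q.2.2.1‖/2) (by positivity) (inK q hq).2.1.2
    dsimp only at this
    positivity
  have hDc : ContinuousOn D K := by
    refine ContinuousOn.sub ?_ ?_
    · exact S.cont.comp (f := fun q : ℝ × En n × En n × ℝ => (q.1, (q.2.1, q.2.2.2)))
        (by fun_prop) (fun q hq => ⟨(inK q hq).1, hbb_sub (inK q hq).2.1⟩)
    · exact S.cont.comp (f := fun q : ℝ × En n × En n × ℝ => (q.1, (q.2.2.1, q.2.2.2)))
        (by fun_prop) (fun q hq => ⟨(inK q hq).1, hbb_sub (inK q hq).2.2⟩)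
  have hne : ∀ q, 0 < D q → q.2.1 ≠ q.2.2.1 := by
    intro q hq he
    simp only [hD, he] at hq
    linarith
  obtain ⟨q, hqK, hq1, hq2, hmax⟩ := max_exists hKc (D := D) (Ψ := Ψ) hDc
    (by
      intro q hq
      have h1 := hPhi q hq
      have h2 : 0 ≤ tb - q.1 := by linarith [((memK q).1 hq).1.2]
      simp only [hΨ]
      positivity)
    (by
      intro q hq hq2
      apply ContinuousAt.continuousWithinAt
      have hpos : 0 < ‖q.2.1 - q.2.2.1‖/2 := by
        have := norm_pos_iff.2 (sub_ne_zero.2 (hne q hq2))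
        positivity
      have := Phi_cont hs ha (q := q) (Z := fun q : ℝ × En n × En n × ℝ => ‖q.2.1 - q.2.2.1‖/2)
        (Y := fun q => q.2.2.2) (by fun_prop) (by fun_prop) hpos
      refine (this.const_mul (N*V)).add ?_
      fun_prop)
    (p := (tb, x0, x0', yb))
    (by
      rw [memK]
      exact ⟨⟨by linarith, le_refl _⟩, h1, h1', ⟨hyb.1, by linarith⟩, by linarith⟩)
    (by simp only [hD, hΨ]; simp; linarith)
  obtain ⟨t, x, x', y⟩ := q
  obtain ⟨⟨a1, a2⟩, a3, a4, ⟨a5, a6⟩, a7⟩ := (memK _).1 hqK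
  obtain ⟨b1, b2, b3⟩ := inK _ hqK
  have hne' := hne _ hq2
  have hP := hPhi _ hqK
  have d1 := abs_le.1 (S.bd t b1 _ b2)
  have d2 := abs_le.1 (S.bd t b1 _ b3)
  simp only [hD, hΨ] at *
  have hsum : ‖x - xb‖^2 + ‖x' - xb‖^2 + (y - yb)^2 + (tb - t) < 1/256 := by
    have : 512 * V * (‖x - xb‖^2 + ‖x' - xb‖^2 + (y - yb)^2 + (tb - t)) < 512 * V * (1/256) := by
      linarith
    exact lt_of_mul_lt_mul_left this (by positivity)
  have c1 : ‖x - xb‖ < 1/16 := by nlinarith [norm_nonneg (x - xb), sq_nonneg ‖x' - xb‖, sq_nonneg (y - yb)]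
  have c2 : ‖x' - xb‖ < 1/16 := by nlinarith [norm_nonneg (x' - xb), sq_nonneg ‖x - xb‖, sq_nonneg (y - yb)]
  have c3 : tb - t < 1/256 := by nlinarith [sq_nonneg ‖x' - xb‖, sq_nonneg ‖x - xb‖, sq_nonneg (y - yb)]
  have c4 : |y - yb| < 1/16 := by
    apply abs_lt_of_sq_lt_sq _ (by norm_num)
    nlinarith [sq_nonneg ‖x' - xb‖, sq_nonneg ‖x - xb‖]
  obtain ⟨c5, c6⟩ := abs_lt.1 c4
  have hr : 0 < ‖x - x'‖ := norm_pos_iff.2 (sub_ne_zero.2 hne')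
  have hr1 : ‖x - x'‖ ≤ 1/8 := by
    have : x - x' = (x - xb) - (x' - xb) := by abel
    rw [this]
    linarith [norm_sub_le (x - xb) (x' - xb)]
  rcases a5.lt_or_eq with hy | hy
  · -- interior
    have key := x_interior (w := u t) (m := N*V) (k := 512*V) (xb := xb) (yb := yb) hs hs' ha ha1
      (by positivity) (by positivity) (S.harm t b1) hyb.1 ⟨b2.1, hy⟩ ⟨b3.1, hy⟩ hne' (by
        have e1 : ∀ᶠ q : En n × En n × ℝ in 𝓝 (x, x', y), ‖q.1 - xb‖ < 1/16 :=
          ev_lt (by fun_prop) c1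
        have e2 : ∀ᶠ q : En n × En n × ℝ in 𝓝 (x, x', y), ‖q.2.1 - xb‖ < 1/16 :=
          ev_lt (by fun_prop) c2
        have e3 : ∀ᶠ q : En n × En n × ℝ in 𝓝 (x, x', y), 0 < q.2.2 :=
          ev_gt (by fun_prop) (by exact hy)
        have e4 : ∀ᶠ q : En n × En n × ℝ in 𝓝 (x, x', y), yb - 1/16 < q.2.2 :=
          ev_gt (by fun_prop) (by show _ < y; linarith)
        have e5 : ∀ᶠ q : En n × En n × ℝ in 𝓝 (x, x', y), q.2.2 < yb + 1/16 :=
          ev_lt (by fun_prop) (by show y < _; linarith)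
        filter_upwards [e1, e2, e3, e4, e5] with q e1 e2 e3 e4 e5
        have := hmax (t, q) ((memK _).2 ⟨⟨a1, a2⟩, e1.le, e2.le, ⟨e3.le, e4.le⟩, e5.le⟩)
        dsimp only at this
        linarith)
    have hz : 1 ≤ (‖x - x'‖/2) ^ (α - 2) :=
      Real.one_le_rpow_of_pos_of_le_one_of_nonpos (by positivity) (by linarith) (by linarith)
    have : N * V * (α * 1) ≤ N * V * (α * (‖x - x'‖/2) ^ (α - 2)) := by gcongr
    have h3 : (512 * (4 * n + 4)) * V < N * α * V := mul_lt_mul_of_pos_right hN1 hV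
    linarith
  · have hy : y = 0 := hy.symm
    subst hy
    have htI : t ∈ Ioc (-1:ℝ) 0 := ⟨by linarith [ht.1], b1.2⟩
    have hx1 : ‖x‖ < 1 := by
      have := b2.1; dsimp only at this; nlinarith [norm_nonneg x]
    have hx1' : ‖x'‖ < 1 := by
      have := b3.1; dsimp only at this; nlinarith [norm_nonneg x']
    have key := x_base (m := N*V) (k := 512*V) (xb := xb) (tb := tb) S hs hs' hM ha (by linarith) ha' haM
      (by positivity) (by positivity) htI hyb.1 hx1 hx1' hne' (by linarith) a3 a4
      (by
        have e5 : ∀ᶠ y in 𝓝 (0:ℝ), y < yb + 1/16 :=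
          ev_lt (by fun_prop) (by linarith)
        filter_upwards [nhdsWithin_le_nhds e5, self_mem_nhdsWithin] with y e5 e6
        have e6 : 0 < y := e6
        have := hmax (t, x, x', y) ((memK _).2 ⟨⟨a1, a2⟩, a3, a4, ⟨e6.le, by
          show yb - 1/16 ≤ y; linarith⟩, e5.le⟩)
        dsimp only at this
        linarith)
      (by
        have e1 : ∀ᶠ σ in 𝓝 (0:ℝ), ‖x + σ • b t x - xb‖ < 1/16 :=
          ev_lt (by fun_prop) (by simpa using c1)
        have e2 : ∀ᶠ σ in 𝓝 (0:ℝ), ‖x' + σ • b t x' - xb‖ < 1/16 :=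
          ev_lt (by fun_prop) (by simpa using c2)
        have e3 : ∀ᶠ σ in 𝓝 (0:ℝ), tb - 1/4 < t + σ :=
          ev_gt (by fun_prop) (by linarith)
        filter_upwards [nhdsWithin_le_nhds e1, nhdsWithin_le_nhds e2, nhdsWithin_le_nhds e3,
          self_mem_nhdsWithin] with σ e1 e2 e3 e6
        have e6 : σ < 0 := e6
        have := hmax (t + σ, x + σ • b t x, x' + σ • b t x', 0) ((memK _).2 ⟨⟨e3.le, by
          show t + σ ≤ tb; linarith⟩, e1.le, e2.le, ⟨le_refl _, a6⟩, a7⟩)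
        dsimp only at this
        linarith)
    have h3 : (2 + 512 * (M/4+1)) * V < N * s / 2 * V := mul_lt_mul_of_pos_right hN2 hV
    linarith


lemma x_lip {n : ℕ} {s M V α N : ℝ} {b : ℝ → En n → En n} {f : ℝ → En n → ℝ}
    {u : ℝ → En n × ℝ → ℝ} (S : Sol s M V b f u) (hs : 0 < s) (hs' : s < 1/2) (hM : 0 ≤ M)
    (ha : 0 < α) (ha1 : α ≤ 1/4) (ha' : α ≤ 2*s) (haM : 5*α*M ≤ s) (hN : 0 ≤ N)
    (hN1 : 512 * (4 * n + 4) < N * α) (hN2 : 2 + 512 * (M/4+1) < N * s / 2)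
    {t y : ℝ} {x xb : En n} (ht : t ∈ Icc (-(1:ℝ)/2) 0) (hy : y ∈ Icc (0:ℝ) (1/2))
    (hxb : ‖xb‖ ≤ 9/16) (h1 : ‖x - xb‖ ≤ 1/16) :
    |u t (x, y) - u t (xb, y)| ≤ (5 * N + 512) * V * ‖x - xb‖ ^ α := by
  have hV := S.Vpos
  have k1 := x_holder S hs hs' hM ha ha1 ha' haM hN hN1 hN2 ht hy hxb h1 (x0' := xb) (by simp)
  have k2 := x_holder S hs hs' hM ha ha1 ha' haM hN hN1 hN2 ht hy hxb (x0 := xb) (by simp) h1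
  rw [norm_sub_rev xb x] at k2
  simp only [sub_self, norm_zero] at k1 k2
  set r := ‖x - xb‖ with hr
  have hr0 : 0 ≤ r := norm_nonneg _
  have p1 : Phi s α (r/2) y ≤ 5 * r ^ α := by
    unfold Phi
    have q1 := Qf_nonneg (s := s) (z := r/2) (by positivity) hy.1
    have q2 : (r/2)^α ≤ r^α := Real.rpow_le_rpow (by positivity) (by linarith) ha.le
    have q3 : 0 ≤ (r/2)^α := by positivity
    nlinarith
  have p2 : r ^ 2 ≤ r ^ α := by
    rcases hr0.lt_or_eq with h | h
    · rw [← Real.rpow_natCast]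
      exact Real.rpow_le_rpow_of_exponent_ge h (by linarith) (by norm_num; linarith)
    · rw [← h]; simp [Real.zero_rpow ha.ne']
  have p3 : N * V * Phi s α (r/2) y ≤ N * V * (5 * r ^ α) := by gcongr
  have p4 : 512 * V * r ^ 2 ≤ 512 * V * r ^ α := by gcongr
  rw [abs_le]
  constructor
  · linarith
  · linarith

lemma max_interior {n : ℕ} {a m : ℝ} {w : En n × ℝ → ℝ} (hw : IsAHarmonicOn a w (halfBall n 1))
    {x xb : En n} {y c : ℝ} (hx : (x, y) ∈ halfBall n 1) {h h' : ℝ → ℝ}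
    (hh : ∀ᶠ η in 𝓝 y, HasDerivAt h (h' η) η) (hc : HasDerivAt h' c y)
    (hmax : ∀ᶠ q : En n × ℝ in 𝓝 (x, y), w q - m * ‖q.1 - xb‖^2 - h q.2 ≤
      w (x, y) - m * ‖x - xb‖^2 - h y) :
    0 ≤ 2 * n * m + c + a / y * h' y := by
  have hΩ := isOpen_halfBall n 1
  have test : ∀ i : Fin n, D2 w (x, y) (EuclideanSpace.single i 1, 0) - m * 2 ≤ 0 := by
    intro i
    set v : En n := EuclideanSpace.single i 1 with hv
    have hnv : ‖v‖ ^ 2 = 1 := by simp [hv]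
    obtain ⟨l1, l2⟩ := line_deriv hΩ hw.1 hx (v, 0)
    let A := ‖x - xb‖^2
    let B := 2 * inner ℝ (x - xb) v
    have key := second_test (g := fun σ => w ((x, y) + σ • (v, (0:ℝ))) - m * (A + B * σ + 1 * σ ^ 2))
        (g' := fun σ => fderiv ℝ w ((x, y) + σ • (v, (0:ℝ))) (v, 0) - m * (B + 2 * 1 * σ))
        (c := D2 w (x, y) (v, 0) - m * (2 * 1))
        (by
          filter_upwards [l1] with σ h1
          exact h1.fun_sub ((poly_d A B 1 σ).const_mul m))
        (l2.fun_sub ((poly_d' B 1).const_mul m))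
        (by
          have ht : Tendsto (fun σ : ℝ => (x + σ • v, y)) (𝓝 0) (𝓝 (x, y)) := by
            have : Continuous (fun σ : ℝ => (x + σ • v, y)) := by fun_prop
            simpa using this.tendsto 0
          filter_upwards [ht.eventually hmax] with σ h1
          have q1 : ‖x + σ • v - xb‖^2 = ‖x - xb‖^2 + 2 * inner ℝ (x - xb) v * σ + σ^2 := by
            have := quad_line (x - xb) v σ
            rw [hnv, one_mul] at this
            rw [← this]; congr 2; abel
          rw [q1] at h1
          simp only [Prod.smul_mk, smul_zero, Prod.mk_add_mk, add_zero, zero_smul]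
          have h2 : w (x + σ • v, y) - m * (‖x - xb‖^2 + 2 * inner ℝ (x - xb) v * σ + σ^2)
            ≤ w (x, y) - m * ‖x - xb‖^2 := by linarith
          refine le_trans (le_of_eq ?_) (h2.trans (le_of_eq ?_))
          · simp only [A, B]; ring
          · simp only [A]; ring)
    linarith [key.2]
  obtain ⟨l1, l2⟩ := line_deriv hΩ hw.1 hx (0, 1)
  have hl : ∀ σ : ℝ, HasDerivAt (fun σ : ℝ => y + σ) 1 σ := fun σ => by
    simpa using (hasDerivAt_id σ).const_add y
  have p1 : ∀ᶠ σ in 𝓝 (0:ℝ), HasDerivAt (fun σ => h (y + σ)) (h' (y + σ)) σ := by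
    have hc' : Tendsto (fun σ : ℝ => y + σ) (𝓝 0) (𝓝 y) := by
      simpa [ContinuousAt] using (hl 0).continuousAt
    filter_upwards [hc'.eventually hh] with σ hσ
    exact (hσ.comp σ (hl σ)).congr_deriv (by ring)
  have p2 : HasDerivAt (fun σ => h' (y + σ)) c 0 := by
    have h0 : HasDerivAt h' c (y + 0) := by simpa using hc
    exact (h0.comp (0:ℝ) (hl 0)).congr_deriv (by ring)
  obtain ⟨ty1, ty2⟩ := second_test (g := fun σ => w ((x, y) + σ • ((0:En n), (1:ℝ))) - h (y + σ))
        (g' := fun σ => fderiv ℝ w ((x, y) + σ • ((0:En n), (1:ℝ))) (0, 1) - h' (y + σ))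
        (c := D2 w (x, y) (0, 1) - c)
        (by
          filter_upwards [l1, p1] with σ h1 h3
          exact h1.fun_sub h3)
        (l2.fun_sub p2)
        (by
          have ht : Tendsto (fun σ : ℝ => (x, y + σ)) (𝓝 0) (𝓝 (x, y)) := by
            have : Continuous (fun σ : ℝ => (x, y + σ)) := by fun_prop
            simpa using this.tendsto 0
          filter_upwards [ht.eventually hmax] with σ h1
          simp only [Prod.smul_mk, smul_zero, Prod.mk_add_mk, add_zero, smul_eq_mul, mul_one]
          linarith)
  simp only [zero_smul, add_zero] at ty1
  have hsum := Finset.sum_nonpos (fun i (_ : i ∈ Finset.univ) => test i)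
  simp only [Finset.sum_sub_distrib, Finset.sum_const, Finset.card_univ, Fintype.card_fin,
    nsmul_eq_mul] at hsum
  have e1 := hw.2 _ hx
  unfold lap at e1
  dsimp only at e1
  have e3 : fderiv ℝ w (x, y) (0, 1) = h' y := by linarith
  rw [e3] at e1
  linarith

set_option maxHeartbeats 1000000 in
lemma time_y {n : ℕ} {s M V α C1 ε : ℝ} {b : ℝ → En n → En n} {f : ℝ → En n → ℝ}
    {u : ℝ → En n × ℝ → ℝ} (S : Sol s M V b f u) (hs : 0 < s) (hs' : s < 1/2) (hM : 0 ≤ M)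
    (ha : 0 < α) (hC1 : 0 ≤ C1) (hε : 0 < ε) (hε1 : ε ≤ 1) {t1 t2 y2 : ℝ} {xb : En n}
    (ht1 : -(1:ℝ)/2 ≤ t1) (ht12 : t1 ≤ t2) (ht2 : t2 ≤ 0) (hy2 : y2 ∈ Icc (0:ℝ) (1/16))
    (hxb : ‖xb‖ ≤ 9/16)
    (H : ∀ x, ‖x - xb‖ ≤ 1/16 → u t1 (x, 0) - u t1 (xb, 0) ≤ C1 * V * ‖x - xb‖ ^ α) :
    u t2 (xb, y2) - u t1 (xb, 0) ≤ C1 * V * ε ^ α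
      + (C1 + 512) * V / ε ^ 2 * ((n + 2) * y2 ^ (2*s) + (n + 3 + M) * (t2 - t1)) := by
  have hV := S.Vpos
  set m := (C1 + 512) * V / ε ^ 2 with hm
  have hm1 : (C1 + 512) * V ≤ m := by
    rw [hm, le_div_iff₀ (by positivity)]
    have : ε ^ 2 ≤ 1 := pow_le_one₀ hε.le hε1
    have h2 : 0 ≤ (C1 + 512) * V := by positivity
    nlinarith
  have hC1V : 0 ≤ C1 * V := by positivity
  have hm0 : 0 < m := by linarith
  have hd : ∀ d : ℝ, 0 ≤ d → d ≤ 1 → C1 * V * d ^ α ≤ C1 * V * ε ^ α + m * d ^ 2 := by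
    intro d hd0 hd1
    rcases le_total d ε with h | h
    · have : C1 * V * d ^ α ≤ C1 * V * ε ^ α := by gcongr
      have h2 : 0 ≤ m * d ^ 2 := by positivity
      linarith
    · have h1 : d ^ α ≤ 1 := Real.rpow_le_one hd0 hd1 ha.le
      have h2 : C1 * V * d ^ α ≤ C1 * V * 1 := by gcongr
      have h3 : ε ^ 2 ≤ d ^ 2 := by gcongr
      have h4 : C1 * V ≤ m * d ^ 2 := by
        rw [hm, div_mul_eq_mul_div, le_div_iff₀ (by positivity)]
        have : C1 * V * ε ^ 2 ≤ C1 * V * d ^ 2 := by gcongr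
        have h5 : 0 ≤ V * d ^ 2 := by positivity
        linarith
      have h5 : 0 ≤ C1 * V * ε ^ α := by positivity
      linarith
  by_contra hcon
  push Not at hcon
  set K : Set (ℝ × En n × ℝ) := Icc t1 t2 ×ˢ Metric.closedBall xb (1/16) ×ˢ Icc 0 (1/16) with hK
  have hKc : IsCompact K := isCompact_Icc.prod ((isCompact_closedBall _ _).prod isCompact_Icc)
  have memK : ∀ q : ℝ × En n × ℝ, q ∈ K ↔ (t1 ≤ q.1 ∧ q.1 ≤ t2) ∧
      ‖q.2.1 - xb‖ ≤ 1/16 ∧ 0 ≤ q.2.2 ∧ q.2.2 ≤ 1/16 := by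
    intro q
    simp only [hK, mem_prod, mem_Icc, Metric.mem_closedBall, dist_eq_norm]
  have inK : ∀ q ∈ K, q.1 ∈ Icc (-1:ℝ) 0 ∧ q.2 ∈ halfBallWithBase n 1 := by
    intro q hq
    obtain ⟨⟨a1, a2⟩, a3, a4, a5⟩ := (memK q).1 hq
    exact ⟨⟨by linarith, by linarith⟩, geom hxb a3 a4 (by linarith)⟩
  have hys : ∀ y : ℝ, 0 ≤ y → y ≤ 1/16 → y ^ 2 ≤ y ^ (2*s) := by
    intro y h0 h1
    rcases h0.lt_or_eq with h | h
    · rw [← Real.rpow_natCast]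
      exact Real.rpow_le_rpow_of_exponent_ge h (by linarith) (by norm_num; linarith)
    · rw [← h]; simp [Real.zero_rpow (by positivity : (2*s) ≠ 0)]
  set Br : ℝ × En n × ℝ → ℝ := fun q => ‖q.2.1 - xb‖^2 - (n+1) * q.2.2^2 + (n+2) * q.2.2 ^ (2*s)
    + (n + 3 + M) * (q.1 - t1) with hBr
  have hBrl : ∀ q ∈ K, ‖q.2.1 - xb‖^2 + q.2.2^2 + (n + 3 + M) * (q.1 - t1) ≤ Br q := by
    intro q hq
    obtain ⟨⟨a1, a2⟩, a3, a4, a5⟩ := (memK q).1 hq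
    have := hys _ a4 a5
    have h2 : ((n:ℝ) + 2) * q.2.2^2 ≤ (n+2) * q.2.2 ^ (2*s) := by gcongr
    simp only [hBr]
    linarith
  have hBr2 : ∀ q ∈ K, ‖q.2.1 - xb‖^2 + q.2.2^2 ≤ Br q := by
    intro q hq
    have := hBrl q hq
    have h2 : 0 ≤ (n + 3 + M) * (q.1 - t1) :=
      mul_nonneg (by positivity) (by linarith [((memK q).1 hq).1.1])
    linarith
  have hε0 : 0 ≤ C1 * V * ε ^ α := by positivity
  obtain ⟨q, hqK, hq1, hq2, hmax⟩ := max_exists hKc (D := fun q => u q.1 q.2 - u t1 (xb, 0))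
    (Ψ := fun q => C1 * V * ε ^ α + m * Br q)
    ((S.cont.mono (fun q hq => ⟨(inK q hq).1, hbb_sub (inK q hq).2⟩)).sub continuousOn_const)
    (by
      intro q hq
      have := hBr2 q hq
      have h2 : 0 ≤ Br q := by nlinarith [sq_nonneg ‖q.2.1 - xb‖, sq_nonneg q.2.2]
      positivity)
    (by
      intro q hq _
      apply ContinuousAt.continuousWithinAt
      have : ContinuousAt (fun q : ℝ × En n × ℝ => q.2.2 ^ (2*s)) q :=
        ContinuousAt.rpow_const (by fun_prop) (Or.inr (by positivity))
      simp only [hBr]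
      fun_prop)
    (p := (t2, xb, y2))
    (by
      rw [memK]
      exact ⟨⟨ht12, le_refl _⟩, by simp, hy2⟩)
    (by
      simp only [hBr]
      simp only [sub_self, norm_zero]
      have : 0 ≤ m * ((n+1) * y2^2) := by positivity
      linarith)
  obtain ⟨t, x, y⟩ := q
  obtain ⟨⟨a1, a2⟩, a3, a4, a5⟩ := (memK _).1 hqK
  obtain ⟨b1, b2⟩ := inK _ hqK
  have hBq := hBr2 _ hqK
  have hb0 : (xb, (0:ℝ)) ∈ halfBallWithBase n 1 := geom hxb (by simp) le_rfl (by norm_num)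
  have d1 := abs_le.1 (S.bd t b1 _ b2)
  have d2 := abs_le.1 (S.bd t1 ⟨by linarith, by linarith⟩ _ hb0)
  dsimp only at hq1 hq2 hmax a1 a2 a3 a4 a5 b1 b2 hBq
  have hsum : ‖x - xb‖^2 + y^2 < 1/256 := by
    have : m * (‖x - xb‖^2 + y^2) ≤ m * Br (t, x, y) := by gcongr
    have h2 : m * (‖x - xb‖^2 + y^2) < m * (1/256) := by linarith
    exact lt_of_mul_lt_mul_left h2 hm0.le
  have c1 : ‖x - xb‖ < 1/16 := by nlinarith [norm_nonneg (x - xb), sq_nonneg y]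
  have c4 : y < 1/16 := by nlinarith [sq_nonneg ‖x - xb‖]
  rcases a4.lt_or_eq with hy | hy
  · have key := max_interior (a := 1-2*s) (m := m) (w := u t) (xb := xb) (S.harm t b1)
      (x := x) (y := y) ⟨b2.1, hy⟩
      (h := fun η => m * (-(n+1) * η^2 + (n+2) * η ^ (2*s)))
      (h' := fun η => m * (-(n+1) * (2 * η) + (n+2) * (2 * s * η ^ (2*s-1))))
      (c := m * (-(n+1) * 2 + (n+2) * (2 * s * ((2*s-1) * y ^ (2*s-1-1)))))
      (by
        filter_upwards [lt_mem_nhds hy] with η hη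
        have e1 : HasDerivAt (fun η : ℝ => η^2) (2 * η) η := by simpa using hasDerivAt_pow 2 η
        have e2 : HasDerivAt (fun η : ℝ => η^(2*s)) (2 * s * η ^ (2*s-1)) η :=
          Real.hasDerivAt_rpow_const (Or.inl hη.ne')
        exact ((e1.const_mul _).fun_add (e2.const_mul _)).const_mul m)
      (by
        have e1 : HasDerivAt (fun η : ℝ => 2 * η) 2 y := by
          simpa using (hasDerivAt_id y).const_mul (2:ℝ)
        have e2 : HasDerivAt (fun η : ℝ => η^(2*s-1)) ((2*s-1) * y ^ (2*s-1-1)) y :=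
          Real.hasDerivAt_rpow_const (Or.inl hy.ne')
        exact ((e1.const_mul _).fun_add ((e2.const_mul _).const_mul _)).const_mul m)
      (by
        have e1 : ∀ᶠ q : En n × ℝ in 𝓝 (x, y), ‖q.1 - xb‖ < 1/16 := ev_lt (by fun_prop) c1
        have e3 : ∀ᶠ q : En n × ℝ in 𝓝 (x, y), 0 < q.2 := ev_gt (by fun_prop) (by exact hy)
        have e5 : ∀ᶠ q : En n × ℝ in 𝓝 (x, y), q.2 < 1/16 := ev_lt (by fun_prop) (by exact c4)
        filter_upwards [e1, e3, e5] with q e1 e3 e5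
        have := hmax (t, q) ((memK _).2 ⟨⟨a1, a2⟩, e1.le, e3.le, e5.le⟩)
        simp only [hBr] at this
        linarith)
    have e : y ^ (2*s-1) = y * y ^ (2*s-1-1) := by
      rw [Real.rpow_sub_one hy.ne' (2*s-1)]; field_simp
    have e2 : (1-2*s)/y * (m * (-(n+1) * (2 * y) + (n+2) * (2 * s * y ^ (2*s-1))))
      = (1-2*s) * (m * (-(n+1) * 2 + (n+2) * (2 * s * y ^ (2*s-1-1)))) := by
      rw [e]; field_simp
    rw [e2] at key
    have e3 : 0 ≤ (1-2*s) * (m * ((n+1) * 2)) :=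
      mul_nonneg (by linarith) (by positivity)
    nlinarith
  · have hy : y = 0 := hy.symm
    subst hy
    have hx1 : ‖x‖ < 1 := by
      have := b2.1; dsimp only at this; nlinarith [norm_nonneg x]
    rcases a1.lt_or_eq with h | h
    · obtain ⟨L, hL, hdL⟩ := S.base t ⟨by linarith, b1.2⟩ x hx1
      have hbx := S.bb t b1 x hx1
      have hfx := abs_le.1 (S.fb t b1 x hx1)
      have N1 : L ≤ 2*s*(m * (n+2)) := by
        refine lhop (s := s) hs (D := fun y => u t (x, y))
          (D' := fun y => fderiv ℝ (u t) (x, y) (0, 1)) (G := fun _ => m * (n+2))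
          (cont_base S.cont b1 hx1) ?_ hL ?_ tendsto_const_nhds
        · filter_upwards [mem_nhds_base hx1] with y hy
          exact S.dy b1 hy
        · have e5 : ∀ᶠ y in 𝓝 (0:ℝ), y < 1/16 := ev_lt (by fun_prop) (by norm_num)
          filter_upwards [nhdsWithin_le_nhds e5, self_mem_nhdsWithin] with y e5 e6
          have e6 : 0 < y := e6
          have := hmax (t, x, y) ((memK _).2 ⟨⟨a1, a2⟩, a3, e6.le, e5.le⟩)
          simp only [hBr] at this
          rw [Real.zero_rpow (by positivity)] at this
          have h0 : 0 ≤ m * ((n+1) * y^2) := by positivity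
          linarith
      set ρ := ‖x - xb‖ with hρ
      have T1 : 0 ≤ (f t x + L) - m * (-(2 * ρ * M) + (n + 3 + M)) := by
        refine left_test (g := fun σ => u (t+σ) (x + σ • b t x, 0)
          - m * ((ρ - M * σ)^2 + (n + 3 + M) * (t + σ - t1))) ?_ ?_
        · have d2 : HasDerivAt (fun σ : ℝ => (ρ - M * σ)^2) (-(2 * ρ * M)) 0 := by
            have a1 : HasDerivAt (fun σ : ℝ => ρ - M * σ) (-M) 0 := by
              simpa using ((hasDerivAt_id (0:ℝ)).const_mul M).const_sub ρ
            have := a1.fun_pow 2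
            refine this.congr_deriv ?_
            simp
          have d3 : HasDerivAt (fun σ : ℝ => (n + 3 + M) * (t + σ - t1)) (n + 3 + M) 0 := by
            have : HasDerivAt (fun σ : ℝ => (t + σ - t1)) 1 0 := by
              simpa using ((hasDerivAt_id (0:ℝ)).const_add t).sub_const t1
            simpa using this.const_mul ((n:ℝ) + 3 + M)
          exact hdL.fun_sub ((d2.fun_add d3).const_mul m).hasDerivWithinAt
        · have e1 : ∀ᶠ σ in 𝓝 (0:ℝ), ‖x + σ • b t x - xb‖ < 1/16 :=
            ev_lt (by fun_prop) (by simpa using c1)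
          have e3 : ∀ᶠ σ in 𝓝 (0:ℝ), t1 < t + σ := ev_gt (by fun_prop) (by linarith)
          filter_upwards [nhdsWithin_le_nhds e1, nhdsWithin_le_nhds e3,
            self_mem_nhdsWithin] with σ e1 e3 e6
          have hσ : σ < 0 := e6
          have := hmax (t + σ, x + σ • b t x, 0) ((memK _).2 ⟨⟨e3.le, by
            show t + σ ≤ t2; linarith⟩, e1.le, le_refl _, a5⟩)
          simp only [hBr] at this
          have n2 : ‖x + σ • b t x - xb‖ ≤ ρ - M * σ := by
            have e : x + σ • b t x - xb = (x - xb) + σ • b t x := by abel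
            rw [e]
            have := norm_add_le (x - xb) (σ • b t x)
            rw [norm_smul, Real.norm_eq_abs, abs_of_neg hσ] at this
            have mm := mul_le_mul_of_nonneg_left hbx (neg_nonneg.2 hσ.le)
            linarith
          have m2 := pow_le_pow_left₀ (norm_nonneg _) n2 2
          have m3 := mul_le_mul_of_nonneg_left m2 hm0.le
          simp only [add_zero, zero_smul, mul_zero, sub_zero]
          linarith
      have r1 : m * (2 * ρ * M) ≤ m * M := by
        apply mul_le_mul_of_nonneg_left _ hm0.le
        nlinarith
      have r2 : 2 * s * (m * (n+2)) ≤ 1 * (m * (n + 2)) := by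
        apply mul_le_mul_of_nonneg_right (by linarith) (by positivity)
      linarith
    · subst h
      have h1 := H x a3
      have h2 := hd ‖x - xb‖ (norm_nonneg _) (by linarith)
      have h3 : m * ‖x - xb‖^2 ≤ m * Br (t1, x, 0) := by
        apply mul_le_mul_of_nonneg_left _ hm0.le
        linarith [sq_nonneg (0:ℝ)]
      linarith


lemma y_interior {n : ℕ} {s β m k : ℝ} (hs : 0 < s) (hs' : s < 1/2) (hb : 0 < β) (hb' : β ≤ 1/2)
    (hm : 0 ≤ m) (hk : 0 ≤ k) {w : En n × ℝ → ℝ} (hw : IsAHarmonicOn (1-2*s) w (halfBall n 1))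
    {x xb : En n} {y y' yb : ℝ} (hyb : 0 ≤ yb) (hx : (x, y) ∈ halfBall n 1)
    (hx' : (x, y') ∈ halfBall n 1) (hlt : y' < y) (hd1 : y - y' ≤ 1)
    (hmax : ∀ᶠ q : En n × ℝ × ℝ in 𝓝 (x, y, y'),
      w (q.1, q.2.1) - w (q.1, q.2.2) - m * (q.2.1 - q.2.2) ^ β
        - k * (‖q.1 - xb‖^2 + (q.2.1 - yb)^2) ≤
      w (x, y) - w (x, y') - m * (y - y') ^ β - k * (‖x - xb‖^2 + (y - yb)^2)) :
    m * β ≤ k * (n + 2) := by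
  have hy : 0 < y := hx.2
  have hy' : 0 < y' := hx'.2
  have hΩ := isOpen_halfBall n 1
  have hd : 0 < y - y' := by linarith
  set d := y - y' with hddef
  have test : ∀ i : Fin n, D2 w (x, y) (EuclideanSpace.single i 1, 0)
      - D2 w (x, y') (EuclideanSpace.single i 1, 0) - k * 2 ≤ 0 := by
    intro i
    set v : En n := EuclideanSpace.single i 1 with hv
    have hnv : ‖v‖ ^ 2 = 1 := by simp [hv]
    obtain ⟨l1, l2⟩ := line_deriv hΩ hw.1 hx (v, 0)
    obtain ⟨l3, l4⟩ := line_deriv hΩ hw.1 hx' (v, 0)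
    let A := ‖x - xb‖^2
    let B := 2 * inner ℝ (x - xb) v
    have key := second_test (g := fun σ => w ((x, y) + σ • (v, (0:ℝ)))
          - w ((x, y') + σ • (v, (0:ℝ))) - k * (A + B * σ + 1 * σ ^ 2))
        (g' := fun σ => fderiv ℝ w ((x, y) + σ • (v, (0:ℝ))) (v, 0)
          - fderiv ℝ w ((x, y') + σ • (v, (0:ℝ))) (v, 0) - k * (B + 2 * 1 * σ))
        (c := D2 w (x, y) (v, 0) - D2 w (x, y') (v, 0) - k * (2 * 1))
        (by
          filter_upwards [l1, l3] with σ h1 h3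
          exact (h1.fun_sub h3).fun_sub ((poly_d A B 1 σ).const_mul k))
        ((l2.fun_sub l4).fun_sub ((poly_d' B 1).const_mul k))
        (by
          have ht : Tendsto (fun σ : ℝ => (x + σ • v, y, y')) (𝓝 0) (𝓝 (x, y, y')) := by
            have : Continuous (fun σ : ℝ => (x + σ • v, y, y')) := by fun_prop
            simpa using this.tendsto 0
          filter_upwards [ht.eventually hmax] with σ h1
          have q1 : ‖x + σ • v - xb‖^2 = ‖x - xb‖^2 + 2 * inner ℝ (x - xb) v * σ + σ^2 := by
            have := quad_line (x - xb) v σ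
            rw [hnv, one_mul] at this
            rw [← this]; congr 2; abel
          rw [q1] at h1
          simp only [Prod.smul_mk, smul_zero, Prod.mk_add_mk, add_zero, zero_smul]
          have h2 : w (x + σ • v, y) - w (x + σ • v, y')
              - k * (‖x - xb‖^2 + 2 * inner ℝ (x - xb) v * σ + σ^2)
            ≤ w (x, y) - w (x, y') - k * ‖x - xb‖^2 := by linarith
          refine le_trans (le_of_eq ?_) (h2.trans (le_of_eq ?_))
          · simp only [A, B]; ring
          · simp only [A]; ring)
    linarith [key.2]
  -- coupled test in the vertical direction
  have hpow : ∀ c : ℝ, (∀ᶠ σ in 𝓝 (0:ℝ), HasDerivAt (fun σ => (d + c * σ) ^ β)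
        (c * β * (d + c * σ) ^ (β - 1)) σ) ∧
      HasDerivAt (fun σ => c * β * (d + c * σ) ^ (β - 1)) (c ^ 2 * β * (β - 1) * d ^ (β - 2)) 0 := by
    intro c
    have hl : ∀ σ : ℝ, HasDerivAt (fun σ : ℝ => d + c * σ) c σ := fun σ => by
      simpa using ((hasDerivAt_id σ).const_mul c).const_add d
    constructor
    · have : ∀ᶠ σ in 𝓝 (0:ℝ), 0 < d + c * σ := ev_gt (by fun_prop) (by simpa using hd)
      filter_upwards [this] with σ h
      exact (hl σ).rpow_const (Or.inl h.ne')
    · have := ((hl 0).rpow_const (p := β - 1) (Or.inl (by simp; exact hd.ne'))).const_mul (c * β)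
      refine this.congr_deriv ?_
      rw [mul_zero, add_zero, show β - 1 - 1 = β - 2 by ring]
      ring
  let A := ‖x - xb‖^2 + (y - yb)^2
  obtain ⟨l1, l2⟩ := line_deriv hΩ hw.1 hx (0, 1)
  obtain ⟨l3, l4⟩ := line_deriv hΩ hw.1 hx' (0, -1)
  obtain ⟨p1, p2⟩ := hpow 2
  obtain ⟨p3, p4⟩ := hpow 1
  obtain ⟨ty1, ty2⟩ := second_test (g := fun σ => w ((x, y) + σ • ((0:En n), (1:ℝ)))
          - w ((x, y') + σ • ((0:En n), (-1:ℝ)))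
        - m * (d + 2 * σ) ^ β - k * (A + (2 * (y - yb)) * σ + 1 * σ ^ 2))
        (g' := fun σ => fderiv ℝ w ((x, y) + σ • ((0:En n), (1:ℝ))) (0, 1)
          - fderiv ℝ w ((x, y') + σ • ((0:En n), (-1:ℝ))) (0, -1)
          - m * (2 * β * (d + 2 * σ) ^ (β - 1)) - k * ((2 * (y - yb)) + 2 * 1 * σ))
        (c := D2 w (x, y) (0, 1) - D2 w (x, y') (0, -1)
          - m * (2 ^ 2 * β * (β - 1) * d ^ (β - 2)) - k * (2 * 1))
        (by
          filter_upwards [l1, l3, p1] with σ h1 h3 h5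
          exact ((h1.fun_sub h3).fun_sub (h5.const_mul m)).fun_sub ((poly_d A _ 1 σ).const_mul k))
        (((l2.fun_sub l4).fun_sub (p2.const_mul m)).fun_sub ((poly_d' _ 1).const_mul k))
        (by
          have ht : Tendsto (fun σ : ℝ => (x, y + σ, y' - σ)) (𝓝 0) (𝓝 (x, y, y')) := by
            have : Continuous (fun σ : ℝ => (x, y + σ, y' - σ)) := by fun_prop
            simpa using this.tendsto 0
          filter_upwards [ht.eventually hmax] with σ h1
          simp only [Prod.smul_mk, smul_zero, Prod.mk_add_mk, add_zero, smul_eq_mul, mul_one,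
            mul_neg, mul_zero, neg_zero]
          rw [show y + σ - (y' - σ) = d + 2 * σ by rw [hddef]; ring] at h1
          rw [← sub_eq_add_neg]
          refine le_trans (le_of_eq ?_) (h1.trans (le_of_eq ?_))
          · simp only [A]; ring
          · simp only [A]; ring)
  obtain ⟨tz1, -⟩ := second_test (g := fun σ => w ((x, y) + σ • ((0:En n), (1:ℝ)))
        - m * (d + 1 * σ) ^ β - k * (A + (2 * (y - yb)) * σ + 1 * σ ^ 2))
        (g' := fun σ => fderiv ℝ w ((x, y) + σ • ((0:En n), (1:ℝ))) (0, 1)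
          - m * (1 * β * (d + 1 * σ) ^ (β - 1)) - k * ((2 * (y - yb)) + 2 * 1 * σ))
        (c := D2 w (x, y) (0, 1)
          - m * (1 ^ 2 * β * (β - 1) * d ^ (β - 2)) - k * (2 * 1))
        (by
          filter_upwards [l1, p3] with σ h1 h5
          exact (h1.fun_sub (h5.const_mul m)).fun_sub ((poly_d A _ 1 σ).const_mul k))
        ((l2.fun_sub (p4.const_mul m)).fun_sub ((poly_d' _ 1).const_mul k))
        (by
          have ht : Tendsto (fun σ : ℝ => (x, y + σ, y')) (𝓝 0) (𝓝 (x, y, y')) := by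
            have : Continuous (fun σ : ℝ => (x, y + σ, y')) := by fun_prop
            simpa using this.tendsto 0
          filter_upwards [ht.eventually hmax] with σ h1
          simp only [Prod.smul_mk, smul_zero, Prod.mk_add_mk, add_zero, smul_eq_mul, mul_one,
            mul_zero]
          rw [show y + σ - y' = d + 1 * σ by rw [hddef]; ring] at h1
          have h2 : w (x, y + σ) - m * (d + 1 * σ) ^ β - k * (‖x - xb‖^2 + (y + σ - yb)^2)
            ≤ w (x, y) - m * d ^ β - k * (‖x - xb‖^2 + (y - yb)^2) := by linarith
          refine le_trans (le_of_eq ?_) (h2.trans (le_of_eq ?_))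
          · simp only [A]; ring
          · simp only [A]; ring)
  simp only [zero_smul, add_zero, mul_zero] at ty1 tz1
  have en : ((0 : En n), (-1:ℝ)) = - ((0 : En n), (1:ℝ)) := by simp
  have hD2 : D2 w (x, y') (0, -1) = D2 w (x, y') (0, 1) := by
    rw [D2_bilin hΩ hw.1 hx', D2_bilin hΩ hw.1 hx', en]
    simp only [map_neg, ContinuousLinearMap.neg_apply, neg_neg]
  rw [hD2] at ty2
  rw [en, map_neg] at ty1
  have hsum := Finset.sum_nonpos (fun i (_ : i ∈ Finset.univ) => test i)
  simp only [Finset.sum_sub_distrib, Finset.sum_const, Finset.card_univ, Fintype.card_fin,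
    nsmul_eq_mul] at hsum
  have e1 := hw.2 _ hx
  have e2 := hw.2 _ hx'
  unfold lap at e1 e2
  dsimp only at e1 e2
  set R := m * (β * d ^ (β - 1)) with hR
  have hR0 : 0 ≤ R := by positivity
  have f1 : fderiv ℝ w (x, y) (0, 1) = R + 2 * k * (y - yb) := by rw [hR]; linarith
  have f2 : fderiv ℝ w (x, y') (0, 1) = R := by rw [hR]; linarith
  rw [f1] at e1
  rw [f2] at e2
  have hay : (1-2*s)/y * (y - yb) ≤ 1 := by
    rw [div_mul_eq_mul_div, div_le_one hy]
    nlinarith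
  have hka := mul_le_mul_of_nonneg_left hay hk
  have hdiv : (1-2*s)/y ≤ (1-2*s)/y' :=
    div_le_div_of_nonneg_left (by linarith) hy' hlt.le
  have hdR := mul_le_mul_of_nonneg_right hdiv hR0
  have hpw : 1 ≤ d ^ (β - 2) :=
    Real.one_le_rpow_of_pos_of_le_one_of_nonpos hd hd1 (by linarith)
  have c1 : (1-2*s)/y * (R + 2 * k * (y - yb)) = (1-2*s)/y * R + 2 * (k * ((1-2*s)/y * (y - yb))) := by
    ring
  rw [c1] at e1
  have c2 : 4 * (m * β * ((1 - β) * d ^ (β - 2))) ≤ k * (2 * n + 4) := by linarith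
  have c3 : 1/2 ≤ (1 - β) * d ^ (β - 2) := by nlinarith
  have c4 : m * β * (1/2) ≤ m * β * ((1 - β) * d ^ (β - 2)) := by gcongr
  linarith

set_option maxHeartbeats 1000000 in
lemma y_holder {n : ℕ} {s M V β N : ℝ} {b : ℝ → En n → En n} {f : ℝ → En n → ℝ}
    {u : ℝ → En n × ℝ → ℝ} (S : Sol s M V b f u) (hs : 0 < s) (hs' : s < 1/2)
    (hb : 0 < β) (hb' : β ≤ 1/2) (hN : 0 ≤ N)
    (hN1 : 512 * (n + 2) < N * β)
    {t yb yb' : ℝ} {xb : En n} (ht : t ∈ Icc (-(1:ℝ)/2) 0) (hyb : yb ≤ 1/2) (hyb0 : 0 ≤ yb')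
    (hyy : yb' ≤ yb) (hxb : ‖xb‖ ≤ 9/16)
    (H : ∀ x, ‖x - xb‖ ≤ 1/16 → ∀ y ∈ Icc (0:ℝ) (9/16), u t (x, y) - u t (x, 0) ≤ N * V * y ^ β) :
    u t (xb, yb) - u t (xb, yb') ≤ N * V * (yb - yb') ^ β := by
  have hV := S.Vpos
  have htI : t ∈ Icc (-1:ℝ) 0 := ⟨by linarith [ht.1], ht.2⟩
  by_contra hcon
  push Not at hcon
  set K : Set (En n × ℝ × ℝ) := (Metric.closedBall xb (1/16) ×ˢ
    Icc (max 0 (yb - 1/16)) (yb + 1/16) ×ˢ Icc 0 1) ∩ {q | q.2.2 ≤ q.2.1} with hK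
  have hKc : IsCompact K := by
    refine IsCompact.inter_right ?_ (isClosed_le (by fun_prop) (by fun_prop))
    exact (isCompact_closedBall _ _).prod (isCompact_Icc.prod isCompact_Icc)
  have memK : ∀ q : En n × ℝ × ℝ, q ∈ K ↔ (‖q.1 - xb‖ ≤ 1/16 ∧
      ((0 ≤ q.2.1 ∧ yb - 1/16 ≤ q.2.1) ∧ q.2.1 ≤ yb + 1/16) ∧ 0 ≤ q.2.2 ∧ q.2.2 ≤ 1) ∧
      q.2.2 ≤ q.2.1 := by
    intro q
    simp only [hK, mem_inter_iff, mem_setOf_eq, mem_prod, mem_Icc, Metric.mem_closedBall,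
      dist_eq_norm, max_le_iff]
  have inK : ∀ q ∈ K, (q.1, q.2.1) ∈ halfBallWithBase n 1 ∧ (q.1, q.2.2) ∈ halfBallWithBase n 1 := by
    intro q hq
    obtain ⟨⟨a1, ⟨⟨a2, a3⟩, a4⟩, a5, a6⟩, a7⟩ := (memK q).1 hq
    exact ⟨geom hxb a1 a2 (by linarith), geom hxb a1 a5 (by linarith)⟩
  have hN0 : 0 ≤ N * V := by positivity
  have huc : ContinuousOn (u t) (closedHalfBall n 1) :=
    S.cont.comp (f := fun p => (t, p)) (by fun_prop) (fun p hp => ⟨htI, hp⟩)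
  obtain ⟨q, hqK, hq1, hq2, hmax⟩ := max_exists hKc
    (D := fun q : En n × ℝ × ℝ => u t (q.1, q.2.1) - u t (q.1, q.2.2))
    (Ψ := fun q => N * V * (q.2.1 - q.2.2) ^ β + 512 * V * (‖q.1 - xb‖^2 + (q.2.1 - yb)^2))
    (by
      refine ContinuousOn.sub ?_ ?_
      · exact huc.comp (f := fun q : En n × ℝ × ℝ => (q.1, q.2.1)) (by fun_prop)
          (fun q hq => hbb_sub (inK q hq).1)
      · exact huc.comp (f := fun q : En n × ℝ × ℝ => (q.1, q.2.2)) (by fun_prop)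
          (fun q hq => hbb_sub (inK q hq).2))
    (by
      intro q hq
      have h1 : 0 ≤ q.2.1 - q.2.2 := by linarith [((memK q).1 hq).2]
      positivity)
    (by
      intro q hq _
      apply ContinuousAt.continuousWithinAt
      have : ContinuousAt (fun q : En n × ℝ × ℝ => (q.2.1 - q.2.2) ^ β) q :=
        ContinuousAt.rpow_const (by fun_prop) (Or.inr hb.le)
      fun_prop)
    (p := (xb, yb, yb'))
    (by
      rw [memK]
      exact ⟨⟨by simp, ⟨⟨by show 0 ≤ yb; linarith, by show yb - 1/16 ≤ yb; linarith⟩,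
        by show yb ≤ yb + 1/16; linarith⟩, hyb0, by show yb' ≤ 1; linarith⟩, hyy⟩)
    (by simp; linarith)
  obtain ⟨x, y, y'⟩ := q
  obtain ⟨⟨a1, ⟨⟨a2, a3⟩, a4⟩, a5, a6⟩, a7⟩ := (memK _).1 hqK
  obtain ⟨b2, b3⟩ := inK _ hqK
  dsimp only at hq1 hq2 hmax a1 a2 a3 a4 a5 a6 a7 b2 b3
  have d1 := abs_le.1 (S.bd t htI _ b2)
  have d2 := abs_le.1 (S.bd t htI _ b3)
  have hd0 : 0 ≤ (y - y') ^ β := Real.rpow_nonneg (by linarith) _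
  have hNd : 0 ≤ N * V * (y - y') ^ β := by positivity
  have hsum : ‖x - xb‖^2 + (y - yb)^2 < 1/256 := by
    have : 512 * V * (‖x - xb‖^2 + (y - yb)^2) < 512 * V * (1/256) := by
      linarith
    exact lt_of_mul_lt_mul_left this (by positivity)
  have c1 : ‖x - xb‖ < 1/16 := by nlinarith [norm_nonneg (x - xb), sq_nonneg (y - yb)]
  have c4 : |y - yb| < 1/16 := by
    apply abs_lt_of_sq_lt_sq _ (by norm_num)
    nlinarith [sq_nonneg ‖x - xb‖]
  obtain ⟨c5, c6⟩ := abs_lt.1 c4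
  have hlt : y' < y := by
    refine lt_of_le_of_ne a7 fun h => ?_
    rw [h] at hq2
    linarith
  have hk0 : 0 ≤ 512 * V * (‖x - xb‖^2 + (y - yb)^2) := by positivity
  have hy' : 0 < y' := by
    refine lt_of_le_of_ne a5 fun h => ?_
    subst h
    have := H x a1 y ⟨a2, by linarith⟩
    rw [sub_zero] at hq1
    linarith
  have key := y_interior (w := u t) (m := N*V) (k := 512*V) (β := β) (xb := xb) (yb := yb) hs hs' hb hb'
    (by positivity) (by positivity) (S.harm t htI) (by linarith) (x := x) (y := y) (y' := y')
    ⟨b2.1, by show 0 < y; linarith⟩ ⟨b3.1, hy'⟩ hlt (by linarith) (by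
      have e1 : ∀ᶠ q : En n × ℝ × ℝ in 𝓝 (x, y, y'), ‖q.1 - xb‖ < 1/16 := ev_lt (by fun_prop) c1
      have e3 : ∀ᶠ q : En n × ℝ × ℝ in 𝓝 (x, y, y'), 0 < q.2.2 :=
        ev_gt (by fun_prop) (by exact hy')
      have e4 : ∀ᶠ q : En n × ℝ × ℝ in 𝓝 (x, y, y'), yb - 1/16 < q.2.1 :=
        ev_gt (by fun_prop) (by show _ < y; linarith)
      have e5 : ∀ᶠ q : En n × ℝ × ℝ in 𝓝 (x, y, y'), q.2.1 < yb + 1/16 :=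
        ev_lt (by fun_prop) (by show y < _; linarith)
      have e6 : ∀ᶠ q : En n × ℝ × ℝ in 𝓝 (x, y, y'), 0 < q.2.1 - q.2.2 :=
        ev_gt (by fun_prop) (by show 0 < y - y'; linarith)
      filter_upwards [e1, e3, e4, e5, e6] with q e1 e3 e4 e5 e6
      have := hmax q ((memK _).2 ⟨⟨e1.le, ⟨⟨by linarith, e4.le⟩, e5.le⟩, e3.le, by linarith⟩,
        by linarith⟩)
      linarith)
  have h3 : (512 * (n + 2)) * V < N * β * V := mul_lt_mul_of_pos_right hN1 hV
  linarith


lemma sig {C1 V α σ c E : ℝ} (hC : 0 ≤ C1) (hV : 0 < V) (hc : 0 ≤ c) (hσ : 0 < σ) (hσ1 : σ ≤ 1)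
    (ha1 : α ≤ 1)
    (h : E ≤ C1 * V * (σ ^ (1/4 : ℝ)) ^ α + (C1 + 512) * V / (σ ^ (1/4:ℝ)) ^ 2 * (c * σ)) :
    E ≤ (C1 + (C1 + 512) * c) * V * σ ^ (α/4) := by
  have e1 : (σ ^ (1/4 : ℝ)) ^ α = σ ^ (α/4) := by
    rw [← Real.rpow_mul hσ.le]; congr 1; ring
  have e2 : (σ ^ (1/4 : ℝ)) ^ 2 = σ ^ (1/2 : ℝ) := by
    rw [← Real.rpow_natCast, ← Real.rpow_mul hσ.le]; norm_num
  have e3 : σ = σ ^ (1/2 : ℝ) * σ ^ (1/2 : ℝ) := by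
    rw [← Real.rpow_add hσ]; norm_num
  have hp : 0 < σ ^ (1/2 : ℝ) := by positivity
  have e4 : (C1 + 512) * V / (σ ^ (1/4:ℝ)) ^ 2 * (c * σ) = (C1 + 512) * c * V * σ ^ (1/2 : ℝ) := by
    rw [e2]
    nth_rewrite 2 [e3]
    field_simp
  have e5 : σ ^ (1/2 : ℝ) ≤ σ ^ (α/4) :=
    Real.rpow_le_rpow_of_exponent_ge hσ hσ1 (by linarith)
  rw [e1, e4] at h
  have e6 : (C1 + 512) * c * V * σ ^ (1/2 : ℝ) ≤ (C1 + 512) * c * V * σ ^ (α/4) := by gcongr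
  linarith

lemma big_pow {r β : ℝ} (hr : 1/16 ≤ r) (hb : 0 < β) (hb1 : β ≤ 1) : 1/16 ≤ r ^ β := by
  calc (1/16:ℝ) = (1/16) ^ (1:ℝ) := by simp
    _ ≤ (1/16) ^ β := Real.rpow_le_rpow_of_exponent_ge (by norm_num) (by norm_num) hb1
    _ ≤ r ^ β := Real.rpow_le_rpow (by norm_num) hr hb.le

set_option maxHeartbeats 1000000 in
lemma consts (n : ℕ) (s : ℝ) (hs : 0 < s) (hs' : s < 1/2) (M : ℝ) (hM : 0 ≤ M) :
    ∃ β C : ℝ, 0 < β ∧ β < 1 ∧ 32 ≤ C ∧ ∀ (V : ℝ) (b : ℝ → En n → En n) (f : ℝ → En n → ℝ)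
      (u : ℝ → En n × ℝ → ℝ), Sol s M V b f u →
      (∀ t ∈ Icc (-(1:ℝ)/2) 0, ∀ y ∈ Icc (0:ℝ) (1/2), ∀ x xb : En n, ‖xb‖ ≤ 9/16 →
        ‖x - xb‖ ≤ 1/16 → |u t (x, y) - u t (xb, y)| ≤ C * V * ‖x - xb‖ ^ β) ∧
      (∀ t1 t2 : ℝ, ∀ xb : En n, -(1:ℝ)/2 ≤ t1 → t1 ≤ t2 → t2 ≤ 0 → ‖xb‖ ≤ 9/16 →
        u t2 (xb, 0) - u t1 (xb, 0) ≤ C * V * (t2 - t1) ^ β) ∧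
      (∀ t ∈ Icc (-(1:ℝ)/2) 0, ∀ y y' : ℝ, ∀ xb : En n, ‖xb‖ ≤ 1/2 → 0 ≤ y' → y' ≤ y → y ≤ 1/2 →
        u t (xb, y) - u t (xb, y') ≤ C * V * (y - y') ^ β) := by
  obtain ⟨α, ha, ha1, ha', haM⟩ : ∃ α : ℝ, 0 < α ∧ α ≤ 1/4 ∧ α ≤ 2*s ∧ 5*α*M ≤ s := by
    have hp : 0 < 5*M+4 := by positivity
    refine ⟨s/(5*M+4), by positivity, ?_, ?_, ?_⟩
    · rw [div_le_iff₀ hp]; nlinarith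
    · rw [div_le_iff₀ hp]; nlinarith
    · rw [mul_div_assoc', div_mul_eq_mul_div, div_le_iff₀ hp]; nlinarith
  obtain ⟨N, hN, hN1, hN2⟩ : ∃ N : ℝ, 0 ≤ N ∧ 512 * (4 * (n:ℝ) + 4) < N * α ∧
      2 + 512 * (M/4+1) < N * s / 2 := by
    refine ⟨512 * (4 * n + 5) / α + 2 * (3 + 512 * (M/4+1)) / s, by positivity, ?_, ?_⟩
    · have h1 : 512 * (4 * (n:ℝ) + 5) / α * α = 512 * (4 * n + 5) := by field_simp
      have h2 : 0 ≤ 2 * (3 + 512 * (M/4+1)) / s * α := by positivity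
      rw [add_mul, h1]; linarith
    · have h1 : 2 * (3 + 512 * (M/4+1)) / s * s = 2 * (3 + 512 * (M/4+1)) := by field_simp
      have h2 : 0 ≤ 512 * (4 * (n:ℝ) + 5) / α * s := by positivity
      rw [add_mul, h1]; linarith
  set C1 := 5 * N + 512 with hC1
  have hC10 : 0 ≤ C1 := by positivity
  set c : ℝ := n + 3 + M with hc
  have hc0 : 0 ≤ c := by positivity
  set C2 := C1 + (C1 + 512) * c with hC2
  have hC12 : C1 ≤ C2 := by
    have : 0 ≤ (C1 + 512) * c := by positivity
    linarith
  set β := s * α / 2 with hβ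
  have hb : 0 < β := by positivity
  have hbα : β ≤ α / 4 := by rw [hβ]; nlinarith
  set C := C2 + 32 + 512 * (n + 3) / β with hC
  have hq0 : 0 ≤ 512 * ((n:ℝ) + 3) / β := by positivity
  have hC0 : 0 ≤ C := by positivity
  have hCb : 512 * ((n:ℝ) + 2) < C * β := by
    have h1 : 512 * ((n:ℝ) + 3) / β * β = 512 * (n + 3) := by field_simp
    have h2 : 0 ≤ (C2 + 32) * β := by positivity
    rw [hC, add_mul, h1]; linarith
  refine ⟨β, C, hb, by linarith, by linarith, ?_⟩
  intro V b f u S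
  have hV := S.Vpos
  have hx : ∀ t ∈ Icc (-(1:ℝ)/2) 0, ∀ y ∈ Icc (0:ℝ) (1/2), ∀ x xb : En n, ‖xb‖ ≤ 9/16 →
        ‖x - xb‖ ≤ 1/16 → |u t (x, y) - u t (xb, y)| ≤ C1 * V * ‖x - xb‖ ^ α :=
    fun t ht y hy x xb hxb h1 => x_lip S hs hs' hM ha ha1 ha' haM hN hN1 hN2 ht hy hxb h1
  have hty : ∀ t1 t2 y ε : ℝ, ∀ xb : En n, 0 < ε → ε ≤ 1 → -(1:ℝ)/2 ≤ t1 → t1 ≤ t2 → t2 ≤ 0 →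
      y ∈ Icc (0:ℝ) (1/16) → ‖xb‖ ≤ 9/16 → u t2 (xb, y) - u t1 (xb, 0) ≤ C1 * V * ε ^ α
      + (C1 + 512) * V / ε ^ 2 * ((n + 2) * y ^ (2*s) + (n + 3 + M) * (t2 - t1)) := by
    intro t1 t2 y ε xb h1 h2 h3 h4 h5 h6 h7
    refine time_y S hs hs' hM ha hC10 h1 h2 h3 h4 h5 h6 h7 ?_
    intro x hx1
    exact (abs_le.1 (hx t1 ⟨h3, by linarith⟩ 0 ⟨le_rfl, by norm_num⟩ x xb h7 hx1)).2
  have hC2V : C2 * V ≤ C * V := by gcongr; linarith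
  refine ⟨?_, ?_, ?_⟩
  · intro t ht y hy x xb hxb h1
    refine (hx t ht y hy x xb hxb h1).trans ?_
    have : ‖x - xb‖ ^ α ≤ ‖x - xb‖ ^ β :=
      Real.rpow_le_rpow_of_exponent_ge' (norm_nonneg _) (by linarith) hb.le (by linarith)
    have h3 : C1 ≤ C := by linarith
    gcongr
  · intro t1 t2 xb h1 h2 h3 h4
    rcases h2.lt_or_eq with h | h
    · have hσ : 0 < t2 - t1 := by linarith
      have hσ1 : t2 - t1 ≤ 1 := by linarith
      have k := hty t1 t2 0 ((t2 - t1) ^ (1/4:ℝ)) xb (by positivity)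
        (Real.rpow_le_one hσ.le hσ1 (by norm_num)) h1 h2 h3 ⟨le_rfl, by norm_num⟩ h4
      rw [Real.zero_rpow (by positivity), mul_zero, zero_add] at k
      have k2 := sig hC10 hV hc0 hσ hσ1 (by linarith) k
      have : (t2 - t1) ^ (α/4) ≤ (t2 - t1) ^ β :=
        Real.rpow_le_rpow_of_exponent_ge hσ hσ1 hbα
      refine k2.trans ?_
      have h7 : C2 ≤ C := by linarith
      gcongr
    · subst h
      simp [Real.zero_rpow hb.ne']
  · intro t ht y y' xb hxb hy0 hyy hy1
    have htI : t ∈ Icc (-1:ℝ) 0 := ⟨by linarith [ht.1], ht.2⟩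
    refine y_holder S hs hs' hb (by linarith) hC0 hCb ht hy1 hy0 hyy (by linarith) ?_
    intro x hx1 y hy
    have hxn : ‖x‖ ≤ 9/16 := by
      have : x = (x - xb) + xb := by abel
      rw [this]
      linarith [norm_add_le (x - xb) xb]
    rcases le_total y (1/16) with h | h
    · rcases hy.1.lt_or_eq with h0 | h0
      · have hσ : 0 < y ^ (2*s) := by positivity
        have hσ1 : y ^ (2*s) ≤ 1 := Real.rpow_le_one h0.le (by linarith) (by positivity)
        have k := hty t t y ((y ^ (2*s)) ^ (1/4:ℝ)) x (by positivity)
          (Real.rpow_le_one hσ.le hσ1 (by norm_num)) ht.1 le_rfl ht.2 ⟨h0.le, h⟩ hxn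
        have k1 : u t (x, y) - u t (x, 0) ≤ C1 * V * ((y ^ (2*s)) ^ (1/4:ℝ)) ^ α
          + (C1 + 512) * V / ((y ^ (2*s)) ^ (1/4:ℝ)) ^ 2 * (c * y ^ (2*s)) := by
          refine k.trans ?_
          rw [sub_self, mul_zero, add_zero]
          gcongr
          rw [hc]; linarith
        have k2 := sig hC10 hV hc0 hσ hσ1 (by linarith) k1
        have e : (y ^ (2*s)) ^ (α/4) = y ^ β := by
          rw [← Real.rpow_mul h0.le, hβ]; congr 1; ring
        rw [e] at k2
        refine k2.trans ?_
        have h7 : C2 ≤ C := by linarith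
        gcongr
      · rw [← h0]
        simp [Real.zero_rpow hb.ne']
    · have d1 := abs_le.1 (S.bd t htI (x, y) (geom hxn (by simp) hy.1 hy.2))
      have d2 := abs_le.1 (S.bd t htI (x, 0) (geom hxn (by simp) le_rfl (by norm_num)))
      have h2 := big_pow h hb (by linarith)
      have h3 : 32 ≤ C := by linarith
      have h4 : 32 * V * (1/16) ≤ C * V * y ^ β := by gcongr
      linarith

lemma limlem {A W B : ℝ} (h : ∀ ε > 0, A ≤ (W + ε) * B) : A ≤ W * B := by
  have h1 : Tendsto (fun ε : ℝ => (W + ε) * B) (𝓝[>] 0) (𝓝 ((W + 0) * B)) := by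
    have : Continuous (fun ε : ℝ => (W + ε) * B) := by fun_prop
    exact (this.tendsto 0).mono_left nhdsWithin_le_nhds
  rw [add_zero] at h1
  exact ge_of_tendsto h1 (by filter_upwards [self_mem_nhdsWithin] with ε hε using h ε hε)


lemma final_aux {n : ℕ} {s M V β C : ℝ} (hb : 0 < β) (hb1 : β < 1) (hC : 32 ≤ C)
    {b : ℝ → En n → En n} {f : ℝ → En n → ℝ} {u : ℝ → En n × ℝ → ℝ} (S : Sol s M V b f u)
    (hX : ∀ t ∈ Icc (-(1:ℝ)/2) 0, ∀ y ∈ Icc (0:ℝ) (1/2), ∀ x xb : En n, ‖xb‖ ≤ 9/16 →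
        ‖x - xb‖ ≤ 1/16 → |u t (x, y) - u t (xb, y)| ≤ C * V * ‖x - xb‖ ^ β)
    {t y : ℝ} {x x' : En n} (ht : t ∈ Icc (-(1:ℝ)/2) 0) (hy : y ∈ Icc (0:ℝ) (1/2))
    (hx : ‖x‖ ≤ 1/2) (hx' : ‖x'‖ ≤ 1/2) :
    |u t (x, y) - u t (x', y)| ≤ C * V * ‖x - x'‖ ^ β := by
  have hV := S.Vpos
  rcases le_total ‖x - x'‖ (1/16) with h | h
  · exact hX t ht y hy x x' (by linarith) h
  · have htI : t ∈ Icc (-1:ℝ) 0 := ⟨by linarith [ht.1], ht.2⟩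
    have d1 := abs_le.1 (S.bd t htI (x, y)
      (geom (xb := x) (by linarith) (by simp) hy.1 (by linarith [hy.2])))
    have d2 := abs_le.1 (S.bd t htI (x', y)
      (geom (xb := x') (by linarith) (by simp) hy.1 (by linarith [hy.2])))
    have h2 := big_pow h hb hb1.le
    have h4 : 32 * V * (1/16) ≤ C * V * ‖x - x'‖ ^ β := by gcongr
    rw [abs_le]
    constructor <;> linarith

lemma hb_half {n : ℕ} {p : En n × ℝ} (h : p ∈ halfBall n (1/2)) :
    ‖p.1‖ ≤ 1/2 ∧ 0 ≤ p.2 ∧ p.2 ≤ 1/2 := by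
  obtain ⟨h1, h2⟩ := h
  refine ⟨?_, h2.le, ?_⟩
  · nlinarith [norm_nonneg p.1, sq_nonneg p.2]
  · nlinarith [sq_nonneg ‖p.1‖]



/-- **Hölder estimate** (Proposition 5.1, localized version of Silvestre's Hölder estimate):
for `b ∈ L^∞ C^{1-2s}` and bounded `f`, bounded solutions are `C^α` in `[-1/2,0] × B_{1/2}^0`
and in `{t} × B_{1/2}^+` for each `t`, with exponent and constant depending only on `s`, `n`
and `M`. -/
theorem holder_estimate_with_drift (n : ℕ) (hn : 1 ≤ n) (s : ℝ) (hs : s ∈ Ioo (0 : ℝ) (1/2))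
    (M : ℝ) (hM : 0 ≤ M) :
    ∃ α ∈ Ioo (0 : ℝ) 1, ∃ C > 0,
      ∀ (b : ℝ → En n → En n) (f : ℝ → En n → ℝ) (u : ℝ → En n × ℝ → ℝ) (U0 F : ℝ),
      0 ≤ U0 → 0 ≤ F →
      (∀ t ∈ Icc (-1 : ℝ) 0, (∀ x ∈ flatBall n 1, ‖b t x‖ ≤ M) ∧
        ∀ x ∈ flatBall n 1, ∀ x' ∈ flatBall n 1,
          ‖b t x - b t x'‖ ≤ M * ‖x - x'‖ ^ (1 - 2*s)) →
      (∀ t ∈ Icc (-1 : ℝ) 0, ∀ x ∈ flatBall n 1, |f t x| ≤ F) →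
      IsExtDDSolution (1 - 2*s) b f u →
      (∀ t ∈ Icc (-1 : ℝ) 0, ∀ p ∈ halfBall n 1, |u t p| ≤ U0) →
      (∀ t ∈ Icc (-(1:ℝ)/2) 0, ∀ x ∈ flatBall n (1/2), |u t (x, 0)| ≤ C * (U0 + F)) ∧
      (∀ t ∈ Icc (-(1:ℝ)/2) 0, ∀ t' ∈ Icc (-(1:ℝ)/2) 0,
        ∀ x ∈ flatBall n (1/2), ∀ x' ∈ flatBall n (1/2),
          |u t (x, 0) - u t' (x', 0)| ≤ C * (U0 + F) * (|t - t'| + ‖x - x'‖) ^ α) ∧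
      (∀ t ∈ Icc (-(1:ℝ)/2) 0, ∀ p ∈ halfBall n (1/2), ∀ q ∈ halfBall n (1/2),
          |u t p - u t q| ≤ C * (U0 + F) * ‖p - q‖ ^ α) := by
  obtain ⟨β, C, hb, hb1, hC, key⟩ := consts n s hs.1 hs.2 M hM
  refine ⟨β, ⟨hb, hb1⟩, 2 * C, by positivity, ?_⟩
  intro b f u U0 F hU0 hF hbM hfF hu hub
  have hsol : ∀ ε > 0, Sol s M (U0 + F + ε) b f u := fun ε hε =>
    Sol.of (by linarith) (by linarith) (by linarith) hbM hfF hu hub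
  have hsol' : ∀ ε > 0, Sol s M (U0 + F + ε) b (fun t x => - f t x) (fun t p => - u t p) :=
    fun ε hε => Sol.of (U0 := U0) (F := F) (by linarith) (by linarith) (by linarith) hbM
      (by simpa using hfF) hu.neg (by simpa using hub)
  have hE : ∀ ε > 0,
      (∀ t ∈ Icc (-(1:ℝ)/2) 0, ∀ y ∈ Icc (0:ℝ) (1/2), ∀ x x' : En n, ‖x‖ ≤ 1/2 → ‖x'‖ ≤ 1/2 →
        |u t (x, y) - u t (x', y)| ≤ C * (U0 + F + ε) * ‖x - x'‖ ^ β) ∧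
      (∀ t1 t2 : ℝ, ∀ xb : En n, -(1:ℝ)/2 ≤ t1 → t1 ≤ t2 → t2 ≤ 0 → ‖xb‖ ≤ 1/2 →
        |u t2 (xb, 0) - u t1 (xb, 0)| ≤ C * (U0 + F + ε) * (t2 - t1) ^ β) ∧
      (∀ t ∈ Icc (-(1:ℝ)/2) 0, ∀ y y' : ℝ, ∀ xb : En n, ‖xb‖ ≤ 1/2 → 0 ≤ y' → y' ≤ y → y ≤ 1/2 →
        |u t (xb, y) - u t (xb, y')| ≤ C * (U0 + F + ε) * (y - y') ^ β) := by
    intro ε hε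
    obtain ⟨k1, k2, k3⟩ := key _ _ _ _ (hsol ε hε)
    obtain ⟨-, k5, k6⟩ := key _ _ _ _ (hsol' ε hε)
    refine ⟨?_, ?_, ?_⟩
    · intro t ht y hy x x' hx hx'
      exact final_aux hb hb1 hC (hsol ε hε) k1 ht hy hx hx'
    · intro t1 t2 xb h1 h2 h3 h4
      have a1 := k2 t1 t2 xb h1 h2 h3 (by linarith)
      have a2 := k5 t1 t2 xb h1 h2 h3 (by linarith)
      rw [abs_le]
      constructor <;> linarith
    · intro t ht y y' xb h1 h2 h3 h4
      have a1 := k3 t ht y y' xb h1 h2 h3 h4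
      have a2 := k6 t ht y y' xb h1 h2 h3 h4
      rw [abs_le]
      constructor <;> linarith
  have hT : ∀ ε > 0, ∀ t ∈ Icc (-(1:ℝ)/2) 0, ∀ t' ∈ Icc (-(1:ℝ)/2) 0, ∀ x : En n, ‖x‖ ≤ 1/2 →
      |u t (x, 0) - u t' (x, 0)| ≤ C * (U0 + F + ε) * |t - t'| ^ β := by
    intro ε hε t ht t' ht' x hx
    rcases le_total t t' with h | h
    · rw [abs_sub_comm, abs_sub_comm t, abs_of_nonneg (sub_nonneg.2 h)]
      exact (hE ε hε).2.1 t t' x ht.1 h ht'.2 hx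
    · rw [abs_of_nonneg (sub_nonneg.2 h)]
      exact (hE ε hε).2.1 t' t x ht'.1 h ht.2 hx
  have hY : ∀ ε > 0, ∀ t ∈ Icc (-(1:ℝ)/2) 0, ∀ y ∈ Icc (0:ℝ) (1/2), ∀ y' ∈ Icc (0:ℝ) (1/2),
      ∀ x : En n, ‖x‖ ≤ 1/2 → |u t (x, y) - u t (x, y')| ≤ C * (U0 + F + ε) * |y - y'| ^ β := by
    intro ε hε t ht y hy y' hy' x hx
    rcases le_total y y' with h | h
    · rw [abs_sub_comm, abs_sub_comm y, abs_of_nonneg (sub_nonneg.2 h)]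
      exact (hE ε hε).2.2 t ht y' y x hx hy.1 h hy'.2
    · rw [abs_of_nonneg (sub_nonneg.2 h)]
      exact (hE ε hε).2.2 t ht y y' x hx hy'.1 h hy.2
  refine ⟨?_, ?_, ?_⟩
  · intro t ht x hx
    have hx2 : ‖x‖ < 1/2 := hx
    have h1 : |u t (x, 0)| ≤ (U0 + F) * 1 := by
      apply limlem
      intro ε hε
      rw [mul_one]
      exact (hsol ε hε).bd t ⟨by linarith [ht.1], ht.2⟩ (x, 0)
        (geom (xb := x) (by linarith) (by simp) le_rfl (by norm_num))
    nlinarith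
  · intro t ht t' ht' x hx x' hx'
    have hx2 : ‖x‖ < 1/2 := hx
    have hx2' : ‖x'‖ < 1/2 := hx'
    have h1 : |u t (x, 0) - u t' (x', 0)| ≤
        (U0 + F) * (2 * C * (|t - t'| + ‖x - x'‖) ^ β) := by
      apply limlem
      intro ε hε
      have a1 := (hE ε hε).1 t ht 0 ⟨le_rfl, by norm_num⟩ x x' hx2.le hx2'.le
      have a2 := hT ε hε t ht t' ht' x' hx2'.le
      have a3 := abs_sub_le (u t (x, 0)) (u t (x', 0)) (u t' (x', 0))
      have hV : 0 < U0 + F + ε := by linarith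
      have b1 : C * (U0 + F + ε) * ‖x - x'‖ ^ β ≤
          C * (U0 + F + ε) * (|t - t'| + ‖x - x'‖) ^ β := by
        gcongr
        linarith [abs_nonneg (t - t')]
      have b2 : C * (U0 + F + ε) * |t - t'| ^ β ≤
          C * (U0 + F + ε) * (|t - t'| + ‖x - x'‖) ^ β := by
        gcongr
        linarith [norm_nonneg (x - x')]
      linarith
    linarith
  · intro t ht p hp q hq
    obtain ⟨p1, p2, p3⟩ := hb_half hp
    obtain ⟨q1, q2, q3⟩ := hb_half hq
    have h1 : |u t p - u t q| ≤ (U0 + F) * (2 * C * ‖p - q‖ ^ β) := by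
      apply limlem
      intro ε hε
      have a1 := (hE ε hε).1 t ht p.2 ⟨p2, p3⟩ p.1 q.1 p1 q1
      have a2 := hY ε hε t ht p.2 ⟨p2, p3⟩ q.2 ⟨q2, q3⟩ q.1 q1
      have a3 := abs_sub_le (u t (p.1, p.2)) (u t (q.1, p.2)) (u t (q.1, q.2))
      have hV : 0 < U0 + F + ε := by linarith
      have n1 : ‖p.1 - q.1‖ ≤ ‖p - q‖ := norm_fst_le (p - q)
      have n2 : |p.2 - q.2| ≤ ‖p - q‖ := norm_snd_le (p - q)
      have b1 : C * (U0 + F + ε) * ‖p.1 - q.1‖ ^ β ≤ C * (U0 + F + ε) * ‖p - q‖ ^ β := by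
        gcongr
      have b2 : C * (U0 + F + ε) * |p.2 - q.2| ^ β ≤ C * (U0 + F + ε) * ‖p - q‖ ^ β := by
        gcongr
      have e1 : u t (p.1, p.2) = u t p := rfl
      have e2 : u t (q.1, q.2) = u t q := rfl
      rw [e1, e2] at a3
      rw [e1] at a1
      rw [e2] at a2
      linarith
    linarith

end
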